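/- Under the standing blow-up assumptions, the blow-up masses satisfy the Pohozaev-type relation 4(σ₁ + σ₂) = (σ₁ − σ₂)². -/

import Mathlib

open MeasureTheory Metric Filter Set

noncomputable section

abbrev E2 := EuclideanSpace ℝ (Fin 2)

/-- The Laplacian of a function `u : ℝ² → ℝ`. -/
def lap (u : E2 → ℝ) (x : E2) : ℝ :=
  ∑ i : Fin 2, fderiv ℝ (fun y => fderiv ℝ u y (EuclideanSpace.single i 1)) x
    (EuclideanSpace.single i 1)

/-- The point `(r cos θ, r sin θ)` on the circle of radius `r` centered at the origin. -/
def circ (r θ : ℝ) : E2 := (WithLp.equiv 2 (Fin 2 → ℝ)).symm ![r * Real.cos θ, r * Real.sin θ]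

/-- Spherical average `ū(r) = (1/(2πr)) ∫_{∂B_r} u dσ`, via arc-length parametrization. -/
def sphAvg (f : E2 → ℝ) (r : ℝ) : ℝ :=
  (2 * Real.pi)⁻¹ * ∫ θ in (0:ℝ)..(2 * Real.pi), f (circ r θ)

/-- Local mass `σ₁ᵏ(r) = (1/(2π)) ∫_{B_r} h₁ᵏ e^{u_k}`. -/
def mass1 (u h : ℕ → E2 → ℝ) (k : ℕ) (r : ℝ) : ℝ :=
  (2 * Real.pi)⁻¹ * ∫ x in ball (0:E2) r, h k x * Real.exp (u k x)

/-- Local mass `σ₂ᵏ(r) = (1/(2π)) ∫_{B_r} h₂ᵏ e^{-u_k}`. -/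
def mass2 (u h : ℕ → E2 → ℝ) (k : ℕ) (r : ℝ) : ℝ :=
  (2 * Real.pi)⁻¹ * ∫ x in ball (0:E2) r, h k x * Real.exp (-(u k x))

/-- The standing blow-up assumptions for the sinh-Gordon equation in `B₁ ⊂ ℝ²`. -/
def BlowUpSetup (u h₁ h₂ : ℕ → E2 → ℝ) : Prop :=
  (∀ k, ContDiffOn ℝ 2 (u k) (ball 0 1)) ∧
  (∀ k, ∀ x ∈ ball (0:E2) 1,
      lap (u k) x + h₁ k x * Real.exp (u k x) - h₂ k x * Real.exp (-(u k x)) = 0) ∧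
  (∀ k, IntegrableOn (fun x => h₁ k x * Real.exp (u k x)) (ball (0:E2) 1)) ∧
  (∀ k, IntegrableOn (fun x => h₂ k x * Real.exp (-(u k x))) (ball (0:E2) 1)) ∧
  (∃ C : ℝ, 0 < C ∧
    (∀ k, ContDiffOn ℝ 3 (h₁ k) (ball 0 1) ∧ ContDiffOn ℝ 3 (h₂ k) (ball 0 1)) ∧
    (∀ k, ∀ x ∈ ball (0:E2) 1,
        C⁻¹ ≤ h₁ k x ∧ h₁ k x ≤ C ∧ C⁻¹ ≤ h₂ k x ∧ h₂ k x ≤ C) ∧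
    (∀ k, ∀ x ∈ ball (0:E2) 1, ∀ j : ℕ, j ≤ 3 →
        ‖iteratedFDerivWithin ℝ j (h₁ k) (ball 0 1) x‖ ≤ C ∧
        ‖iteratedFDerivWithin ℝ j (h₂ k) (ball 0 1) x‖ ≤ C) ∧
    (∀ k, ∀ x ∈ sphere (0:E2) 1, ∀ y ∈ sphere (0:E2) 1, |u k x - u k y| ≤ C) ∧
    (∀ k, (∫ x in ball (0:E2) 1, h₁ k x * Real.exp (u k x)) ≤ C) ∧
    (∀ k, (∫ x in ball (0:E2) 1, h₂ k x * Real.exp (-(u k x))) ≤ C)) ∧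
  (∀ K : Set E2, IsCompact K → K ⊆ ball 0 1 \ {0} → ∃ CK : ℝ, ∀ k, ∀ x ∈ K, |u k x| ≤ CK) ∧
  (∀ M : ℝ, ∀ᶠ k in atTop, ∃ x ∈ ball (0:E2) 1, M < |u k x|)

/-- `σ` is the iterated limit `lim_{δ→0⁺} lim_{k→∞} F k δ`. -/
def IsBlowUpMass (F : ℕ → ℝ → ℝ) (σ : ℝ) : Prop :=
  ∃ S : ℝ → ℝ, (∀ δ : ℝ, 0 < δ → δ < 1 → Tendsto (fun k => F k δ) atTop (nhds (S δ))) ∧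
    Tendsto S (nhdsWithin 0 (Ioi 0)) (nhds σ)

/-- The properties of the bubbling set `Σ_k` produced by the selection process. -/
def SelectionSet (u : ℕ → E2 → ℝ) (Sk : ℕ → Finset E2) : Prop :=
  (∀ k, (Sk k).Nonempty) ∧
  (∀ ε : ℝ, 0 < ε → ∀ᶠ k in atTop, ∀ x ∈ Sk k, ‖x‖ < ε) ∧
  (∃ C₁ : ℝ, 0 < C₁ ∧ ∀ k, ∀ x ∈ ball (0:E2) 1,
      |u k x| + 2 * Real.log (infDist x (↑(Sk k) : Set E2)) ≤ C₁)

/-- Convergence in `C²_loc(ℝ²)`. -/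
def ConvC2loc (w : ℕ → E2 → ℝ) (v : E2 → ℝ) : Prop :=
  ∀ K : Set E2, IsCompact K → ∀ j : ℕ, j ≤ 2 →
    TendstoUniformlyOn (fun k y => iteratedFDeriv ℝ j (w k) y) (iteratedFDeriv ℝ j v) atTop K

/-- Uniform convergence to `-∞` on every compact subset of `ℝ²`. -/
def TendsNegInfLoc (w : ℕ → E2 → ℝ) : Prop :=
  ∀ K : Set E2, IsCompact K → ∀ M : ℝ, ∀ᶠ k in atTop, ∀ y ∈ K, w k y ≤ -M

/-!
Write `z = x₁ + i x₂`. The function `2z ∂_z u = (r∂_r - i∂_θ) u` satisfies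
`2z̄ ∂_{z̄} (2z ∂_z u) = |z|² Δu`, so its Fourier coefficients on the circle of radius `r` solve
first-order equations in `r` driven by those of `Δu`. The zeroth coefficient is
`m(r) = (2π)⁻¹ ∫_{B_r} Δu`; those of negative index see only the mass inside `B_r`, and those of
positive index only the mass outside, up to boundary data.

With `M(r) = (2π)⁻¹ ∫_{B_r} (h₁e^u + h₂e^{-u})`, the Pohozaev identity gives `4M(r)` as the real
part of the circle mean of `(2z ∂_z u)²`, up to `O(r)` and a boundary term that is small on average
over `r ∈ (s, 2s]`. By Parseval that mean is `m(r)²` plus products of coefficients of opposite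
index, and summing geometric series bounds these by `∬_{ρ ≤ r < ρ'} ρ/(ρ' - ρ) dM(ρ) dM(ρ')`, up to
boundary data of size `O(s)`. Averaging over `r` cancels the singularity on the diagonal: pairs in
`(s/L, 2sL]` contribute at most a multiple of `(M(2sL) - M(s/L))²`, all others at most a multiple of
`1/(L - 1)`. Since both limits defining a blow-up mass exist, `M(2sL) - M(s/L)` vanishes as `k → ∞`
and then `s → 0`; finally `L → ∞`.
-/

open scoped Topology ENNReal ComplexConjugate

section Fourier

variable {a b : ℝ} (hab : a < b)

theorem fourierCoeffOn_conj (f : ℝ → ℂ) (n : ℤ) :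
    fourierCoeffOn hab (fun x => conj (f x)) n = conj (fourierCoeffOn hab f (-n)) := by
  simp only [fourierCoeffOn_eq_integral, Complex.real_smul, map_mul, Complex.conj_ofReal,
    ← intervalIntegral.intervalIntegral_conj, smul_eq_mul, ← fourier_neg, neg_neg]

theorem fourierCoeffOn_zero (f : ℝ → ℂ) :
    fourierCoeffOn hab f 0 = (b - a)⁻¹ • ∫ x in a..b, f x := by
  simp [fourierCoeffOn_eq_integral]

theorem fourierCoeffOn_add {f g : ℝ → ℂ} (hf : IntervalIntegrable f volume a b)
    (hg : IntervalIntegrable g volume a b) (n : ℤ) :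
    fourierCoeffOn hab (fun x => f x + g x) n =
      fourierCoeffOn hab f n + fourierCoeffOn hab g n := by
  have hcont : Continuous fun x : ℝ => fourier (-n) (x : AddCircle (b - a)) :=
    (map_continuous _).comp (AddCircle.continuous_mk' _)
  simp only [fourierCoeffOn_eq_integral, smul_eq_mul, mul_add]
  rw [intervalIntegral.integral_add (hf.continuousOn_mul hcont.continuousOn)
    (hg.continuousOn_mul hcont.continuousOn), smul_add]

theorem norm_fourierCoeffOn_le (f : ℝ → ℂ) (n : ℤ) :
    ‖fourierCoeffOn hab f n‖ ≤ (b - a)⁻¹ * ∫ x in a..b, ‖f x‖ := by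
  have hpos : 0 < b - a := sub_pos.2 hab
  rw [fourierCoeffOn_eq_integral, norm_smul, one_div, norm_inv, Real.norm_of_nonneg hpos.le]
  gcongr
  refine (intervalIntegral.norm_integral_le_integral_norm hab.le).trans_eq ?_
  simp only [norm_smul, fourier_apply, Circle.norm_coe, one_mul]

theorem fourierCoeffOn_deriv {f f' : ℝ → ℂ} (hf : ∀ x ∈ uIcc a b, HasDerivAt f (f' x) x)
    (hf' : IntervalIntegrable f' volume a b) (hend : f b = f a) (n : ℤ) :
    fourierCoeffOn hab f' n = 2 * Real.pi * Complex.I * n / (b - a) * fourierCoeffOn hab f n := by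
  have hpos : ((b : ℂ) - a) ≠ 0 := by exact_mod_cast (sub_pos.2 hab).ne'
  rcases eq_or_ne n 0 with rfl | hn
  · rw [fourierCoeffOn_zero, intervalIntegral.integral_eq_sub_of_hasDerivAt hf hf', hend]
    simp
  · have hnC : (n : ℂ) ≠ 0 := by exact_mod_cast hn
    have hpi : (Real.pi : ℂ) ≠ 0 := by exact_mod_cast Real.pi_ne_zero
    rw [fourierCoeffOn_of_hasDerivAt hab hn hf hf', hend, sub_self, mul_zero]
    field_simp [Complex.I_ne_zero]
    ring

theorem hasSum_conj_fourierCoeff_mul {T : ℝ} [Fact (0 < T)]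
    (f g : Lp ℂ 2 (@AddCircle.haarAddCircle T _)) :
    HasSum (fun n : ℤ => conj (fourierCoeff f n) * fourierCoeff g n)
      (∫ t, conj (f t) * g t ∂AddCircle.haarAddCircle) := by
  have h := fourierBasis.hasSum_inner_mul_inner f g
  rw [L2.inner_def] at h
  simpa only [← fourierBasis_repr, HilbertBasis.repr_apply_apply, inner_conj_symm,
    RCLike.inner_apply'] using h

theorem hasSum_conj_fourierCoeffOn_mul {f g : ℝ → ℂ} (hf : MemLp f 2 (volume.restrict (Ioc a b)))
    (hg : MemLp g 2 (volume.restrict (Ioc a b))) :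
    HasSum (fun n : ℤ => conj (fourierCoeffOn hab f n) * fourierCoeffOn hab g n)
      (fourierCoeffOn hab (fun x => conj (f x) * g x) 0) := by
  have : Fact (0 < b - a) := ⟨sub_pos.2 hab⟩
  rw [← add_sub_cancel a b] at hf hg
  have hF := hf.memLp_liftIoc.haarAddCircle
  have hG := hg.memLp_liftIoc.haarAddCircle
  convert hasSum_conj_fourierCoeff_mul hF.toLp hG.toLp using 1
  · simp only [fourierCoeff_congr_ae hF.coeFn_toLp, fourierCoeff_congr_ae hG.coeFn_toLp,
      fourierCoeffOn]
  · simp only [fourierCoeffOn, fourierCoeff, neg_zero, fourier_zero, one_smul]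
    refine integral_congr_ae ?_
    filter_upwards [hF.coeFn_toLp, hG.coeFn_toLp] with t hFt hGt
    rw [hFt, hGt]
    rfl

theorem hasSum_fourierCoeffOn_neg_mul {f g : ℝ → ℂ} (hf : MemLp f 2 (volume.restrict (Ioc a b)))
    (hg : MemLp g 2 (volume.restrict (Ioc a b))) :
    HasSum (fun n : ℤ => fourierCoeffOn hab f (-n) * fourierCoeffOn hab g n)
      (fourierCoeffOn hab (fun x => f x * g x) 0) := by
  have hstar (n : ℤ) : conj (fourierCoeffOn hab (star f) n) = fourierCoeffOn hab f (-n) := by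
    rw [← Complex.conj_conj (fourierCoeffOn hab f (-n)), ← fourierCoeffOn_conj]
    rfl
  simpa [hstar] using hasSum_conj_fourierCoeffOn_mul hab hf.star hg

theorem enorm_fourierCoeffOn_sq_sub_sq_le {f : ℝ → ℂ} (hf : MemLp f 2 (volume.restrict (Ioc a b))) :
    ‖fourierCoeffOn hab (fun x => f x ^ 2) 0 - fourierCoeffOn hab f 0 ^ 2‖ₑ ≤
      2 * ∑' n : ℕ,
        ‖fourierCoeffOn hab f (-(n + 1 : ℕ))‖ₑ * ‖fourierCoeffOn hab f (n + 1 : ℕ)‖ₑ := by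
  have hsum := (hasSum_fourierCoeffOn_neg_mul hab hf hf).nat_add_neg
  have htail := (hasSum_nat_add_iff' 1).2 hsum
  have hvalue : fourierCoeffOn hab (fun x => f x ^ 2) 0 - fourierCoeffOn hab f 0 ^ 2 =
      ∑' n : ℕ, 2 * (fourierCoeffOn hab f (-(n + 1 : ℕ)) * fourierCoeffOn hab f (n + 1 : ℕ)) := by
    rw [← sub_eq_zero, ← sub_eq_zero.2 htail.tsum_eq.symm]
    simp only [Finset.range_one, Finset.sum_singleton, Nat.cast_zero, neg_zero, neg_neg, ← sq,
      two_mul, mul_comm (fourierCoeffOn hab f (_ + 1 : ℕ))]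
    ring
  rw [hvalue, ← ENNReal.tsum_mul_left]
  refine enorm_tsum_le_tsum_enorm.trans_eq ?_
  simp only [enorm_mul, show ‖(2 : ℂ)‖ₑ = 2 by simp [enorm]]

end Fourier

section Circle

/-- Rotation of the plane by a right angle, so that `rot x` is the angular direction at `x`,
scaled by `‖x‖`. -/
def rot : E2 →L[ℝ] E2 :=
  (EuclideanSpace.proj 0 : E2 →L[ℝ] ℝ).smulRight (EuclideanSpace.single 1 1) -
    (EuclideanSpace.proj 1 : E2 →L[ℝ] ℝ).smulRight (EuclideanSpace.single 0 1)

theorem rot_apply (x : E2) :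
    rot x = x 0 • EuclideanSpace.single 1 1 - x 1 • EuclideanSpace.single 0 1 := by
  simp [rot]

theorem rot_rot (x : E2) : rot (rot x) = -x := by
  ext i
  fin_cases i <;> simp [rot_apply]

theorem inner_rot_self (x : E2) : inner ℝ x (rot x) = 0 := by
  simp [rot_apply, PiLp.inner_apply, mul_comm]

theorem circ_eq_repr_polarCoord_symm (r θ : ℝ) :
    circ r θ = Complex.orthonormalBasisOneI.repr (Complex.polarCoord.symm (r, θ)) := by
  ext i
  fin_cases i
  · simpa [circ, Complex.polarCoord_symm_apply] using Or.inl (Complex.cos_ofReal_re θ).symm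
  · simpa [circ, Complex.polarCoord_symm_apply] using Or.inl (Complex.sin_ofReal_re θ).symm

theorem circ_eq_smul (r θ : ℝ) : circ r θ = r • circ 1 θ := by
  ext i
  fin_cases i <;> simp [circ]

theorem norm_circ (r θ : ℝ) : ‖circ r θ‖ = |r| := by
  rw [circ_eq_repr_polarCoord_symm, LinearIsometryEquiv.norm_map, Complex.norm_polarCoord_symm]

theorem circ_mem_ball {r δ : ℝ} (hr : r ∈ Ico 0 δ) (θ : ℝ) : circ r θ ∈ ball (0 : E2) δ := by
  rw [mem_ball_zero_iff, norm_circ, abs_of_nonneg hr.1]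
  exact hr.2

theorem circ_periodic (r : ℝ) : Function.Periodic (circ r) (2 * Real.pi) := fun θ => by
  simp [circ]

theorem continuous_circ : Continuous fun p : ℝ × ℝ => circ p.1 p.2 := by
  refine (PiLp.continuous_toLp 2 _).comp (continuous_pi fun i => ?_)
  fin_cases i
  · exact continuous_fst.mul (Real.continuous_cos.comp continuous_snd)
  · exact continuous_fst.mul (Real.continuous_sin.comp continuous_snd)

theorem continuousOn_comp_circ {E : Type*} [TopologicalSpace E] {δ : ℝ} {H : E2 → E}
    (hH : ContinuousOn H (ball 0 δ)) :
    ContinuousOn (fun p : ℝ × ℝ => H (circ p.1 p.2)) (Ico 0 δ ×ˢ univ) :=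
  hH.comp continuous_circ.continuousOn fun p hp => circ_mem_ball hp.1 p.2

theorem continuous_comp_circ {E : Type*} [TopologicalSpace E] {δ r : ℝ} {H : E2 → E}
    (hH : ContinuousOn H (ball 0 δ)) (hr : r ∈ Ico 0 δ) : Continuous fun θ => H (circ r θ) :=
  hH.comp_continuous (continuous_circ.comp (Continuous.prodMk_right r)) (circ_mem_ball hr)

theorem hasDerivAt_circ_radius (r θ : ℝ) : HasDerivAt (fun r => circ r θ) (circ 1 θ) r := by
  rw [funext fun r => circ_eq_smul r θ]
  exact ((hasDerivAt_id r).smul_const (circ 1 θ)).congr_deriv (one_smul ℝ _)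

theorem hasDerivAt_circ_angle (r θ : ℝ) : HasDerivAt (circ r) (rot (circ r θ)) θ := by
  have hcirc : circ r = fun θ => (r * Real.cos θ) • (EuclideanSpace.single 0 1 : E2) +
      (r * Real.sin θ) • EuclideanSpace.single 1 1 := by
    ext θ i
    fin_cases i <;> simp [circ]
  rw [hcirc]
  refine ((((Real.hasDerivAt_cos θ).const_mul r).smul_const _).add
    (((Real.hasDerivAt_sin θ).const_mul r).smul_const _)).congr_deriv ?_
  ext i
  fin_cases i <;> simp [rot_apply]

end Circle

section ParametricIntegral

variable {E : Type*} [NormedAddCommGroup E] [NormedSpace ℝ E] {F : ℝ → ℝ → E}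

theorem continuousOn_intervalIntegral_param {s : Set ℝ}
    (hF : ContinuousOn (Function.uncurry F) (s ×ˢ univ)) (a b : ℝ) :
    ContinuousOn (fun r => ∫ θ in a..b, F r θ) s := by
  rw [continuousOn_iff_continuous_domRestrict]
  refine intervalIntegral.continuous_parametric_intervalIntegral_of_continuous'
    (f := fun (r : s) θ => F r θ) ?_ a b
  exact hF.comp_continuous (f := fun p : s × ℝ => ((p.1 : ℝ), p.2)) (by fun_prop)
    fun p => ⟨p.1.2, mem_univ _⟩

theorem continuous_of_continuousOn_prod_univ {α β X : Type*} [TopologicalSpace α]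
    [TopologicalSpace β] [TopologicalSpace X] {F : α → β → X} {s : Set α}
    (hF : ContinuousOn (Function.uncurry F) (s ×ˢ univ)) {r : α} (hr : r ∈ s) :
    Continuous (F r) :=
  hF.comp_continuous (f := fun θ => (r, θ)) (by fun_prop) fun _ => ⟨hr, mem_univ _⟩

theorem hasDerivAt_intervalIntegral_param {F' : ℝ → ℝ → E} {s : Set ℝ} {r : ℝ} (hs : s ∈ 𝓝 r)
    (hF : ContinuousOn (Function.uncurry F) (s ×ˢ univ))
    (hF' : ContinuousOn (Function.uncurry F') (s ×ˢ univ))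
    (hderiv : ∀ ρ ∈ s, ∀ θ, HasDerivAt (fun ρ => F ρ θ) (F' ρ θ) ρ) (a b : ℝ) :
    HasDerivAt (fun r => ∫ θ in a..b, F r θ) (∫ θ in a..b, F' r θ) r := by
  have hr := mem_of_mem_nhds hs
  obtain ⟨ε, hε, hball⟩ := nhds_basis_closedBall.mem_iff.1 hs
  obtain ⟨C, hC⟩ := ((isCompact_closedBall r ε).prod isCompact_uIcc).exists_bound_of_continuousOn
    (hF'.mono (prod_mono hball (subset_univ (uIcc a b))))
  refine (intervalIntegral.hasDerivAt_integral_of_dominated_loc_of_deriv_le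
    (bound := fun _ => C) (closedBall_mem_nhds r hε) ?_ ?_ ?_ ?_ ?_ ?_).2
  · filter_upwards [hs] with ρ hρ
    exact (continuous_of_continuousOn_prod_univ hF hρ).aestronglyMeasurable
  · exact (continuous_of_continuousOn_prod_univ hF hr).intervalIntegrable _ _
  · exact (continuous_of_continuousOn_prod_univ hF' hr).aestronglyMeasurable
  · exact ae_of_all _ fun θ hθ ρ hρ => hC (ρ, θ) ⟨hρ, uIoc_subset_uIcc hθ⟩
  · exact intervalIntegrable_const
  · exact ae_of_all _ fun θ _ ρ hρ => hderiv ρ (hball hρ) θ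

end ParametricIntegral

section PolarIntegration

/-- The mass `(1/2π) ∫_{B_r} f` of a density on the disk of radius `r`. -/
def diskMass (f : E2 → ℝ) (r : ℝ) : ℝ := (2 * Real.pi)⁻¹ * ∫ x in ball (0 : E2) r, f x

theorem setIntegral_ball_eq_setIntegral_polar (f : E2 → ℝ) (r : ℝ) :
    ∫ x in ball (0 : E2) r, f x =
      ∫ p in Ioo 0 r ×ˢ Ioo (-Real.pi) Real.pi, p.1 * f (circ p.1 p.2) := by
  rw [← integral_indicator measurableSet_ball,
    ← Complex.orthonormalBasisOneI.measurePreserving_repr.integral_comp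
      Complex.orthonormalBasisOneI.measurableEquiv.measurableEmbedding,
    ← Complex.integral_comp_polarCoord_symm]
  simp only [polarCoord_target,
    ← integral_indicator (measurableSet_Ioi.prod measurableSet_Ioo),
    ← integral_indicator (measurableSet_Ioo.prod measurableSet_Ioo)]
  congr 1
  ext ⟨ρ, θ⟩
  have hball (hρ : 0 < ρ) :
      (ball (0 : E2) r).indicator f (circ ρ θ) = if ρ < r then f (circ ρ θ) else 0 := by
    by_cases hr : ρ < r <;> simp [indicator, norm_circ, abs_of_pos hρ, hr]
  simp only [indicator_apply, mem_prod, mem_Ioi, mem_Ioo, ← circ_eq_repr_polarCoord_symm,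
    smul_eq_mul]
  rcases le_or_gt ρ 0 with hρ | hρ
  · simp [hρ.not_gt]
  · rw [hball hρ]
    by_cases hr : ρ < r <;> simp [hρ, hr]

theorem diskMass_eq_integral_sphAvg {f : E2 → ℝ} {δ r : ℝ} (hf : ContinuousOn f (ball 0 δ))
    (hr : r ∈ Ico 0 δ) : diskMass f r = ∫ ρ in (0 : ℝ)..r, ρ * sphAvg f ρ := by
  have hcont : ContinuousOn (fun p : ℝ × ℝ => p.1 * f (circ p.1 p.2)) (Ico 0 δ ×ˢ univ) :=
    continuousOn_fst.mul (continuousOn_comp_circ hf)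
  have hint : IntegrableOn (fun p : ℝ × ℝ => p.1 * f (circ p.1 p.2))
      (Ioo 0 r ×ˢ Ioo (-Real.pi) Real.pi) (volume.prod volume) :=
    ((hcont.mono (prod_mono (Icc_subset_Ico_right hr.2) (subset_univ _))).integrableOn_compact
      (isCompact_Icc.prod isCompact_Icc)).mono_set
      (prod_mono Ioo_subset_Icc_self Ioo_subset_Icc_self)
  have hangle (ρ : ℝ) : ∫ θ in Ioo (-Real.pi) Real.pi, f (circ ρ θ) = 2 * Real.pi * sphAvg f ρ := by
    rw [← integral_Ioc_eq_integral_Ioo, ← intervalIntegral.integral_of_le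
      (neg_le_self Real.pi_pos.le), sphAvg, mul_inv_cancel_left₀ Real.two_pi_pos.ne']
    simpa [two_mul, ← sub_eq_add_neg] using
      ((circ_periodic ρ).comp f).intervalIntegral_add_eq (-Real.pi) 0
  rw [diskMass, setIntegral_ball_eq_setIntegral_polar, Measure.volume_eq_prod,
    setIntegral_prod _ hint, intervalIntegral.integral_of_le hr.1, integral_Ioc_eq_integral_Ioo,
    ← integral_const_mul]
  refine setIntegral_congr_fun measurableSet_Ioo fun ρ _ => ?_
  simp only [integral_const_mul, hangle]
  field_simp

end PolarIntegration

section CircleCoefficients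

/-- The Fourier coefficient `(1/2π) ∫₀^{2π} e^{-inθ} H(r cos θ, r sin θ) dθ` of `H` on the circle of
radius `r`. -/
def circCoeff (n : ℤ) (H : E2 → ℂ) (r : ℝ) : ℂ :=
  fourierCoeffOn Real.two_pi_pos (fun θ => H (circ r θ)) n

theorem circCoeff_eq_integral (n : ℤ) (H : E2 → ℂ) (r : ℝ) :
    circCoeff n H r = (2 * Real.pi)⁻¹ •
      ∫ θ in (0 : ℝ)..(2 * Real.pi), Complex.exp (-(n * θ * Complex.I)) * H (circ r θ) := by
  rw [circCoeff, fourierCoeffOn_eq_integral, sub_zero, one_div]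
  congr 2 with θ
  rw [fourier_coe_apply, smul_eq_mul]
  congr 2
  have : (Real.pi : ℂ) ≠ 0 := Complex.ofReal_ne_zero.2 Real.pi_ne_zero
  push_cast
  field_simp

theorem circCoeff_zero_ofReal (f : E2 → ℝ) (r : ℝ) :
    circCoeff 0 (fun x => (f x : ℂ)) r = sphAvg f r := by
  simp [circCoeff, fourierCoeffOn_zero, sphAvg, intervalIntegral.integral_ofReal]

theorem circCoeff_zero_radius_zero (H : E2 → ℂ) : circCoeff 0 H 0 = H 0 := by
  have hcirc (θ : ℝ) : circ 0 θ = 0 := by rw [circ_eq_smul, zero_smul]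
  simp only [circCoeff, fourierCoeffOn_zero, hcirc, intervalIntegral.integral_const]
  rw [inv_smul_smul₀ (by simp [Real.pi_ne_zero])]

theorem norm_circCoeff_le {H : E2 → ℂ} {g : E2 → ℝ} {r : ℝ}
    (hH : Continuous fun θ => H (circ r θ)) (hg : Continuous fun θ => g (circ r θ))
    (hHg : ∀ θ, ‖H (circ r θ)‖ ≤ g (circ r θ)) (n : ℤ) : ‖circCoeff n H r‖ ≤ sphAvg g r := by
  refine (norm_fourierCoeffOn_le _ _ _).trans ?_
  rw [sphAvg, sub_zero]
  gcongr
  exact intervalIntegral.integral_mono_on Real.two_pi_pos.le (hH.norm.intervalIntegrable _ _)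
    (hg.intervalIntegrable _ _) fun θ _ => hHg θ

variable {H : E2 → ℂ} {δ r : ℝ}

theorem continuousOn_exp_mul_comp_circ (hH : ContinuousOn H (ball 0 δ)) (n : ℤ) :
    ContinuousOn (Function.uncurry fun r θ : ℝ => Complex.exp (-(n * θ * Complex.I)) * H (circ r θ))
      (Ico 0 δ ×ˢ univ) :=
  ContinuousOn.mul (Continuous.continuousOn (by fun_prop)) (continuousOn_comp_circ hH)

theorem continuousOn_circCoeff (hH : ContinuousOn H (ball 0 δ)) (n : ℤ) :
    ContinuousOn (circCoeff n H) (Ico 0 δ) := by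
  rw [funext (circCoeff_eq_integral n H)]
  exact (continuousOn_intervalIntegral_param (continuousOn_exp_mul_comp_circ hH n)
    0 (2 * Real.pi)).const_smul (2 * Real.pi)⁻¹

theorem hasDerivAt_comp_circ_radius (hH : ContDiffOn ℝ 1 H (ball 0 δ)) (hr : r ∈ Ioo 0 δ) (θ : ℝ) :
    HasDerivAt (fun r => H (circ r θ)) (r⁻¹ * fderiv ℝ H (circ r θ) (circ r θ)) r := by
  have hmem := circ_mem_ball (Ioo_subset_Ico_self hr) θ
  have hdiff := (hH.contDiffAt (isOpen_ball.mem_nhds hmem)).differentiableAt one_ne_zero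
  refine (hdiff.hasFDerivAt.comp_hasDerivAt r (hasDerivAt_circ_radius r θ)).congr_deriv ?_
  have hradial : circ 1 θ = r⁻¹ • circ r θ := by
    rw [circ_eq_smul r, inv_smul_smul₀ hr.1.ne']
  rw [hradial, map_smul, Complex.real_smul]

theorem hasDerivAt_circCoeff (hH : ContDiffOn ℝ 1 H (ball 0 δ)) (hr : r ∈ Ioo 0 δ) (n : ℤ) :
    HasDerivAt (circCoeff n H) (r⁻¹ * circCoeff n (fun x => fderiv ℝ H x x) r) r := by
  have hdH : ContinuousOn (fun x => fderiv ℝ H x x) (ball 0 δ) :=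
    (hH.continuousOn_fderiv_of_isOpen isOpen_ball le_rfl).clm_apply continuousOn_id
  have hsub : Ioo 0 δ ×ˢ (univ : Set ℝ) ⊆ Ico 0 δ ×ˢ univ := prod_mono Ioo_subset_Ico_self le_rfl
  have hinv : ContinuousOn (fun p : ℝ × ℝ => ((p.1⁻¹ : ℝ) : ℂ)) (Ioo 0 δ ×ˢ univ) :=
    Complex.continuous_ofReal.comp_continuousOn
      (continuousOn_fst.inv₀ fun p hp => hp.1.1.ne')
  rw [funext (circCoeff_eq_integral n H), circCoeff_eq_integral]
  refine ((hasDerivAt_intervalIntegral_param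
    (F' := fun ρ θ => ((ρ⁻¹ : ℝ) : ℂ) *
      (Complex.exp (-(n * θ * Complex.I)) * fderiv ℝ H (circ ρ θ) (circ ρ θ)))
    (Ioo_mem_nhds hr.1 hr.2) ((continuousOn_exp_mul_comp_circ hH.continuousOn n).mono hsub)
    (hinv.mul ((continuousOn_exp_mul_comp_circ hdH n).mono hsub))
    (fun ρ hρ θ => ?_) 0 (2 * Real.pi)).const_smul (2 * Real.pi)⁻¹).congr_deriv ?_
  · exact ((hasDerivAt_comp_circ_radius hH hρ θ).const_mul _).congr_deriv (mul_left_comm _ _ _)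
  · rw [intervalIntegral.integral_const_mul, mul_smul_comm]

theorem circCoeff_fderiv_rot (hH : ContDiffOn ℝ 1 H (ball 0 δ)) (hr : r ∈ Ico 0 δ) (n : ℤ) :
    circCoeff n (fun x => fderiv ℝ H x (rot x)) r = Complex.I * n * circCoeff n H r := by
  have hdH : ContinuousOn (fun x => fderiv ℝ H x (rot x)) (ball 0 δ) :=
    (hH.continuousOn_fderiv_of_isOpen isOpen_ball le_rfl).clm_apply rot.continuous.continuousOn
  have hderiv (θ : ℝ) : HasDerivAt (fun θ => H (circ r θ)) (fderiv ℝ H (circ r θ) (rot (circ r θ)))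
      θ := by
    have hdiff := (hH.contDiffAt (isOpen_ball.mem_nhds (circ_mem_ball hr θ))).differentiableAt
      one_ne_zero
    exact hdiff.hasFDerivAt.comp_hasDerivAt θ (hasDerivAt_circ_angle r θ)
  have hpi : (Real.pi : ℂ) ≠ 0 := by exact_mod_cast Real.pi_ne_zero
  rw [circCoeff, fourierCoeffOn_deriv Real.two_pi_pos (fun θ _ => hderiv θ)
    ((continuous_comp_circ hdH hr).intervalIntegrable _ _) (congrArg H (circ_periodic r).eq)]
  rw [circCoeff]
  push_cast
  field_simp
  ring

end CircleCoefficients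

section PolarDbar

/-- The equation `2z̄ ∂_{z̄} H = |z|² S` on the disk of radius `δ`, written without dividing by the
radius: `x ↦ DH(x) x` is the derivative `r∂_r` and `x ↦ DH(x) (rot x)` is `∂_θ`. -/
structure HasPolarDbar (δ : ℝ) (H S : E2 → ℂ) : Prop where
  contDiffOn : ContDiffOn ℝ 1 H (ball 0 δ)
  continuousOn : ContinuousOn S (ball 0 δ)
  fderiv_add : ∀ x ∈ ball (0 : E2) δ,
    fderiv ℝ H x x + Complex.I * fderiv ℝ H x (rot x) = (‖x‖ : ℂ) ^ 2 * S x

namespace HasPolarDbar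

variable {δ : ℝ} {H S : E2 → ℂ} (h : HasPolarDbar δ H S)
include h

theorem circCoeff_fderiv_self {r : ℝ} (hr : r ∈ Ico 0 δ) (n : ℤ) :
    circCoeff n (fun x => fderiv ℝ H x x) r =
      n * circCoeff n H r + (r : ℂ) ^ 2 * circCoeff n S r := by
  have hdH : ContinuousOn (fun x => fderiv ℝ H x (rot x)) (ball 0 δ) :=
    (h.contDiffOn.continuousOn_fderiv_of_isOpen isOpen_ball le_rfl).clm_apply
      rot.continuous.continuousOn
  have hpoint : (fun θ => fderiv ℝ H (circ r θ) (circ r θ)) = fun θ =>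
      (r : ℂ) ^ 2 * S (circ r θ) + -Complex.I * fderiv ℝ H (circ r θ) (rot (circ r θ)) := by
    funext θ
    have := h.fderiv_add _ (circ_mem_ball hr θ)
    rw [norm_circ, abs_of_nonneg hr.1] at this
    linear_combination this
  rw [circCoeff, hpoint, fourierCoeffOn_add, fourierCoeffOn.const_mul, fourierCoeffOn.const_mul,
    ← circCoeff, ← circCoeff.eq_1 n (fun x => fderiv ℝ H x (rot x)),
    circCoeff_fderiv_rot h.contDiffOn hr]
  · linear_combination -(n * circCoeff n H r) * Complex.I_sq
  · exact ((continuous_comp_circ h.continuousOn hr).const_mul _).intervalIntegrable _ _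
  · exact ((continuous_comp_circ hdH hr).const_mul _).intervalIntegrable _ _

theorem hasDerivAt_circCoeff {r : ℝ} (hr : r ∈ Ioo 0 δ) (n : ℤ) :
    HasDerivAt (circCoeff n H) (n / r * circCoeff n H r + r * circCoeff n S r) r := by
  refine (_root_.hasDerivAt_circCoeff h.contDiffOn hr n).congr_deriv ?_
  have hr0 : (r : ℂ) ≠ 0 := by exact_mod_cast hr.1.ne'
  rw [h.circCoeff_fderiv_self (Ioo_subset_Ico_self hr)]
  push_cast
  field_simp

theorem hasDerivAt_zpow_smul_circCoeff {r : ℝ} (hr : r ∈ Ioo 0 δ) (n : ℤ) :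
    HasDerivAt (fun r => r ^ (-n) • circCoeff n H r) (r ^ (1 - n) • circCoeff n S r) r := by
  have hr0 : (r : ℂ) ≠ 0 := by exact_mod_cast hr.1.ne'
  refine ((hasDerivAt_zpow (-n) r (Or.inl hr.1.ne')).smul
    (h.hasDerivAt_circCoeff hr n)).congr_deriv ?_
  rw [show 1 - n = -n + 1 by ring]
  simp only [Complex.real_smul, zpow_sub_one₀ hr.1.ne', zpow_add_one₀ hr.1.ne']
  push_cast
  field_simp
  ring

theorem zpow_smul_circCoeff_sub {n : ℤ} {s t : ℝ} (hs : 0 ≤ s) (hsn : 0 < s ∨ n ≤ 0) (hst : s ≤ t)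
    (ht : t < δ) :
    t ^ (-n) • circCoeff n H t - s ^ (-n) • circCoeff n H s =
      ∫ ρ in s..t, ρ ^ (1 - n) • circCoeff n S ρ := by
  have hsub : Icc s t ⊆ Ico 0 δ := fun ρ hρ => ⟨hs.trans hρ.1, hρ.2.trans_lt ht⟩
  have hzpow {m : ℤ} (hm : n ≤ 0 → 0 ≤ m) : ContinuousOn (fun ρ : ℝ => ρ ^ m) (Icc s t) :=
    continuousOn_id.zpow₀ m fun ρ hρ => hsn.imp (fun h0 => (h0.trans_le hρ.1).ne') hm
  refine (intervalIntegral.integral_eq_sub_of_hasDerivAt_of_le hst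
    ((hzpow (by lia)).smul ((continuousOn_circCoeff h.contDiffOn.continuousOn n).mono hsub))
    (fun ρ hρ => h.hasDerivAt_zpow_smul_circCoeff
      ⟨hs.trans_lt hρ.1, hρ.2.trans ht⟩ n) ?_).symm
  exact ((hzpow (by lia)).smul
    ((continuousOn_circCoeff h.continuousOn n).mono hsub)).intervalIntegrable_of_Icc hst

theorem circCoeff_zero (h0 : H 0 = 0) {r : ℝ} (hr : r ∈ Ico 0 δ) :
    circCoeff 0 H r = ∫ ρ in (0 : ℝ)..r, ρ • circCoeff 0 S ρ := by
  simpa [circCoeff_zero_radius_zero, h0] using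
    h.zpow_smul_circCoeff_sub (n := 0) le_rfl (Or.inr le_rfl) hr.1 hr.2

theorem re_circCoeff_zero (h0 : H 0 = 0) {r : ℝ} (hr : r ∈ Ico 0 δ) :
    (circCoeff 0 H r).re = diskMass (fun x => (S x).re) r := by
  have hre : ContinuousOn (fun x => (S x).re) (ball 0 δ) :=
    Complex.continuous_re.comp_continuousOn h.continuousOn
  have hsub : uIcc 0 r ⊆ Ico 0 δ := by
    rw [uIcc_of_le hr.1]
    exact Icc_subset_Ico_right hr.2
  have hint : IntervalIntegrable (fun ρ : ℝ => ρ • circCoeff 0 S ρ) volume 0 r :=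
    (continuousOn_id.smul ((continuousOn_circCoeff h.continuousOn 0).mono hsub)).intervalIntegrable
  rw [diskMass_eq_integral_sphAvg hre hr, h.circCoeff_zero h0 hr, ← Complex.reCLM_apply,
    ← Complex.reCLM.intervalIntegral_comp_comm hint]
  refine intervalIntegral.integral_congr fun ρ hρ => ?_
  have hcirc := (continuous_comp_circ h.continuousOn (hsub hρ)).intervalIntegrable
    (μ := volume) 0 (2 * Real.pi)
  simp only [circCoeff, fourierCoeffOn_zero, sub_zero, map_smul, smul_eq_mul, sphAvg,
    ← Complex.reCLM.intervalIntegral_comp_comm hcirc, Complex.reCLM_apply]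

theorem circCoeff_zero_eq_diskMass {f : E2 → ℝ} (h0 : H 0 = 0)
    (hS : S = fun x => (f x : ℂ)) {r : ℝ} (hr : r ∈ Ico 0 δ) :
    circCoeff 0 H r = diskMass f r := by
  have hf : ContinuousOn f (ball 0 δ) := by
    simpa [hS, Function.comp_def] using Complex.continuous_re.comp_continuousOn h.continuousOn
  rw [diskMass_eq_integral_sphAvg hf hr, h.circCoeff_zero h0 hr, hS]
  simp [circCoeff_zero_ofReal, ← intervalIntegral.integral_ofReal]

end HasPolarDbar

end PolarDbar

section RadialMeasure

variable {δ R s t : ℝ} {g : E2 → ℝ}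

theorem sphAvg_nonneg {r : ℝ} (hg : ∀ x ∈ ball (0 : E2) δ, 0 ≤ g x) (hr : r ∈ Ico 0 δ) :
    0 ≤ sphAvg g r :=
  mul_nonneg (inv_nonneg.2 Real.two_pi_pos.le)
    (intervalIntegral.integral_nonneg Real.two_pi_pos.le fun θ _ => hg _ (circ_mem_ball hr θ))

theorem continuousOn_sphAvg (hg : ContinuousOn g (ball 0 δ)) : ContinuousOn (sphAvg g) (Ico 0 δ) :=
  continuousOn_const.mul
    (continuousOn_intervalIntegral_param (F := fun r θ => g (circ r θ)) (continuousOn_comp_circ hg)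
      0 (2 * Real.pi))

/-- The image under `x ↦ ‖x‖` of the measure `(2π)⁻¹ g dx` on the disk of radius `R`. -/
def radialMeasure (g : E2 → ℝ) (R : ℝ) : Measure ℝ :=
  (volume.restrict (Ioc 0 R)).withDensity fun ρ => ENNReal.ofReal (ρ * sphAvg g ρ)

theorem restrict_radialMeasure (hs : 0 ≤ s) (ht : t ≤ R) :
    (radialMeasure g R).restrict (Ioc s t) =
      (volume.restrict (Ioc s t)).withDensity fun ρ => ENNReal.ofReal (ρ * sphAvg g ρ) := by
  rw [radialMeasure, restrict_withDensity measurableSet_Ioc, Measure.restrict_restrict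
    measurableSet_Ioc, inter_eq_self_of_subset_left (Ioc_subset_Ioc hs ht)]

theorem continuousOn_mul_sphAvg (hg : ContinuousOn g (ball 0 δ)) :
    ContinuousOn (fun ρ => ρ * sphAvg g ρ) (Ico 0 δ) :=
  continuousOn_id.mul (continuousOn_sphAvg hg)

theorem setLIntegral_radialMeasure (hg : ContinuousOn g (ball 0 δ)) (hs : 0 ≤ s) (ht : t ≤ R)
    (hR : R < δ) (f : ℝ → ℝ≥0∞) :
    ∫⁻ ρ in Ioc s t, f ρ ∂radialMeasure g R =
      ∫⁻ ρ in Ioc s t, ENNReal.ofReal (ρ * sphAvg g ρ) * f ρ := by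
  have hcont : ContinuousOn (fun ρ => ρ * sphAvg g ρ) (Ioc s t) :=
    (continuousOn_mul_sphAvg hg).mono fun ρ hρ =>
      ⟨hs.trans hρ.1.le, (hρ.2.trans ht).trans_lt hR⟩
  have hmeas : AEMeasurable (fun ρ => ENNReal.ofReal (ρ * sphAvg g ρ))
      (volume.restrict (Ioc s t)) := (hcont.aemeasurable measurableSet_Ioc).ennreal_ofReal
  rw [restrict_radialMeasure hs ht, lintegral_withDensity_eq_lintegral_mul_non_measurable₀ _ hmeas
    (ae_of_all _ fun _ => ENNReal.ofReal_lt_top)]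
  rfl

theorem radialMeasure_Ioc (hg : ContinuousOn g (ball 0 δ)) (hg0 : ∀ x ∈ ball (0 : E2) δ, 0 ≤ g x)
    (hs : 0 ≤ s) (hst : s ≤ t) (ht : t ≤ R) (hR : R < δ) :
    radialMeasure g R (Ioc s t) = ENNReal.ofReal (diskMass g t - diskMass g s) := by
  have hsub {a b : ℝ} (ha : 0 ≤ a) (hb : b ≤ R) : Icc a b ⊆ Ico 0 δ :=
    fun ρ hρ => ⟨ha.trans hρ.1, (hρ.2.trans hb).trans_lt hR⟩
  have hint {a b : ℝ} (ha : 0 ≤ a) (hab : a ≤ b) (hb : b ≤ R) :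
      IntervalIntegrable (fun ρ => ρ * sphAvg g ρ) volume a b :=
    ((continuousOn_mul_sphAvg hg).mono (hsub ha hb)).intervalIntegrable_of_Icc hab
  rw [← setLIntegral_one, setLIntegral_radialMeasure hg hs ht hR,
    diskMass_eq_integral_sphAvg hg ⟨hs.trans hst, ht.trans_lt hR⟩,
    diskMass_eq_integral_sphAvg hg ⟨hs, (hst.trans ht).trans_lt hR⟩,
    intervalIntegral.integral_interval_sub_left (hint le_rfl (hs.trans hst) ht)
      (hint le_rfl hs (hst.trans ht)), intervalIntegral.integral_of_le hst,
    ofReal_integral_eq_lintegral_ofReal (hint hs hst ht).1]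
  · simp only [mul_one]
  · refine (ae_restrict_mem measurableSet_Ioc).mono fun ρ hρ => ?_
    have hρ' := hsub hs ht (Ioc_subset_Icc_self hρ)
    exact mul_nonneg hρ'.1 (sphAvg_nonneg hg0 hρ')

theorem radialMeasure_univ (hg : ContinuousOn g (ball 0 δ)) (hg0 : ∀ x ∈ ball (0 : E2) δ, 0 ≤ g x)
    (hR0 : 0 ≤ R) (hR : R < δ) :
    radialMeasure g R univ = ENNReal.ofReal (diskMass g R) := by
  have hIoc : radialMeasure g R univ = radialMeasure g R (Ioc 0 R) := by
    rw [radialMeasure, withDensity_apply _ .univ, withDensity_apply _ measurableSet_Ioc,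
      Measure.restrict_univ, Measure.restrict_restrict measurableSet_Ioc, inter_self]
  rw [hIoc, radialMeasure_Ioc hg hg0 le_rfl hR0 le_rfl hR]
  simp [diskMass]

end RadialMeasure

section ModeEstimates

namespace HasPolarDbar

variable {δ R : ℝ} {H S : E2 → ℂ} {g : E2 → ℝ} (h : HasPolarDbar δ H S)
  (hg : ContinuousOn g (ball 0 δ)) (hSg : ∀ x ∈ ball (0 : E2) δ, ‖S x‖ ≤ g x) (hR : R < δ)
include h hg hSg hR

theorem enorm_zpow_smul_circCoeff_sub_le {n : ℤ} {s t w : ℝ} (hs : 0 ≤ s) (hsn : 0 < s ∨ n ≤ 0)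
    (hst : s ≤ t) (ht : t ≤ R) (hw : 0 ≤ w) :
    ‖(w / t) ^ n • circCoeff n H t - (w / s) ^ n • circCoeff n H s‖ₑ ≤
      ∫⁻ ρ in Ioc s t, ENNReal.ofReal ((w / ρ) ^ n) ∂radialMeasure g R := by
  have hlhs : (w / t) ^ n • circCoeff n H t - (w / s) ^ n • circCoeff n H s =
      w ^ n • ∫ ρ in s..t, ρ ^ (1 - n) • circCoeff n S ρ := by
    rw [← h.zpow_smul_circCoeff_sub hs hsn hst (ht.trans_lt hR), smul_sub, smul_smul, smul_smul,
      zpow_neg, zpow_neg, ← div_eq_mul_inv, ← div_eq_mul_inv, div_zpow, div_zpow]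
  rw [hlhs, ← intervalIntegral.integral_smul, intervalIntegral.integral_of_le hst,
    setLIntegral_radialMeasure hg hs ht hR]
  refine (enorm_integral_le_lintegral_enorm _).trans
    (setLIntegral_mono' measurableSet_Ioc fun ρ hρ => ?_)
  have hρ0 : 0 < ρ := hs.trans_lt hρ.1
  have hρ' : ρ ∈ Ico 0 δ := ⟨hρ0.le, (hρ.2.trans ht).trans_lt hR⟩
  have hS := norm_circCoeff_le (continuous_comp_circ h.continuousOn hρ')
    (continuous_comp_circ hg hρ') (fun θ => hSg _ (circ_mem_ball hρ' θ)) n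
  rw [smul_smul, enorm_smul, ← ofReal_norm, ← ofReal_norm,
    Real.norm_of_nonneg (by positivity),
    ← ENNReal.ofReal_mul (by positivity), ← ENNReal.ofReal_mul
      (mul_nonneg hρ0.le ((norm_nonneg _).trans hS))]
  refine ENNReal.ofReal_le_ofReal ?_
  calc w ^ n * ρ ^ (1 - n) * ‖circCoeff n S ρ‖
      ≤ w ^ n * ρ ^ (1 - n) * sphAvg g ρ := by gcongr
    _ = ρ * sphAvg g ρ * (w / ρ) ^ n := by
      rw [sub_eq_add_neg, zpow_add₀ hρ0.ne', zpow_one, zpow_neg, div_zpow]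
      ring

theorem enorm_circCoeff_neg_le {r : ℝ} (hr0 : 0 < r) (hr : r ≤ R) (n : ℕ) :
    ‖circCoeff (-(n + 1 : ℕ)) H r‖ₑ ≤
      ∫⁻ ρ in Ioc 0 r, ENNReal.ofReal ((ρ / r) ^ (n + 1)) ∂radialMeasure g R := by
  have hn : -((n + 1 : ℕ) : ℤ) ≠ 0 := by lia
  have hmode := h.enorm_zpow_smul_circCoeff_sub_le hg hSg hR (n := -(n + 1 : ℕ)) le_rfl
    (Or.inr (by lia)) hr0.le hr hr0.le
  rw [div_self hr0.ne', one_zpow, one_smul, div_zero, zero_zpow _ hn, zero_smul, sub_zero] at hmode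
  simpa only [zpow_neg, zpow_natCast, ← inv_pow, inv_div] using hmode

theorem enorm_circCoeff_succ_le {r : ℝ} (hr0 : 0 < r) (hr : r ≤ R) (n : ℕ) :
    ‖circCoeff (n + 1 : ℕ) H r‖ₑ ≤ ENNReal.ofReal ((r / R) ^ (n + 1)) * ‖circCoeff (n + 1 : ℕ) H R‖ₑ
      + ∫⁻ ρ in Ioc r R, ENNReal.ofReal ((r / ρ) ^ (n + 1)) ∂radialMeasure g R := by
  have hmode := h.enorm_zpow_smul_circCoeff_sub_le hg hSg hR (n := (n + 1 : ℕ)) hr0.le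
    (Or.inl hr0) hr le_rfl hr0.le
  rw [div_self hr0.ne', one_zpow, one_smul] at hmode
  simp only [zpow_natCast] at hmode
  set c := circCoeff (n + 1 : ℕ) H r
  set d := circCoeff (n + 1 : ℕ) H R
  calc ‖c‖ₑ = ‖(r / R) ^ (n + 1) • d - ((r / R) ^ (n + 1) • d - c)‖ₑ := by rw [sub_sub_cancel]
    _ ≤ ‖(r / R) ^ (n + 1) • d‖ₑ + ‖(r / R) ^ (n + 1) • d - c‖ₑ := enorm_sub_le
    _ ≤ _ := by
      rw [enorm_smul, Real.enorm_of_nonneg (by have := hr0.trans_le hr; positivity)]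
      gcongr

end HasPolarDbar

end ModeEstimates

section PolarGradient

theorem fderiv_fderiv_apply_clm {E F : Type*} [NormedAddCommGroup E] [NormedSpace ℝ E]
    [NormedAddCommGroup F] [NormedSpace ℝ F] {u : E → F} {x : E} (hu : ContDiffAt ℝ 2 u x)
    (A : E →L[ℝ] E) (v : E) :
    fderiv ℝ (fun y => fderiv ℝ u y (A y)) x v =
      fderiv ℝ (fderiv ℝ u) x v (A x) + fderiv ℝ u x (A v) := by
  have hdu : DifferentiableAt ℝ (fderiv ℝ u) x :=
    (hu.fderiv_right (m := 1) le_rfl).differentiableAt one_ne_zero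
  rw [fderiv_clm_apply hdu A.differentiableAt, A.fderiv]
  simp [add_comm]

theorem fderiv_ofReal_comp_apply {E : Type*} [NormedAddCommGroup E] [NormedSpace ℝ E] {f : E → ℝ}
    {x : E} (hf : DifferentiableAt ℝ f x) (v : E) :
    fderiv ℝ (fun y => (f y : ℂ)) x v = fderiv ℝ f x v := by
  have hderiv : HasFDerivAt (fun y => (f y : ℂ)) (Complex.ofRealCLM ∘L fderiv ℝ f x) x :=
    Complex.ofRealCLM.hasFDerivAt.comp x hf.hasFDerivAt
  rw [hderiv.fderiv]
  rfl

theorem norm_sq_mul_lap {u : E2 → ℝ} {x : E2} (hu : ContDiffAt ℝ 2 u x) :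
    ‖x‖ ^ 2 * lap u x =
      fderiv ℝ (fderiv ℝ u) x x x + fderiv ℝ (fderiv ℝ u) x (rot x) (rot x) := by
  have hdu : DifferentiableAt ℝ (fderiv ℝ u) x :=
    (hu.fderiv_right (m := 1) le_rfl).differentiableAt one_ne_zero
  have hx : x = x 0 • EuclideanSpace.single 0 1 + x 1 • EuclideanSpace.single 1 1 := by
    ext i
    fin_cases i <;> simp
  simp only [lap, fderiv_clm_apply hdu (differentiableAt_const _)]
  rw [EuclideanSpace.real_norm_sq_eq, rot_apply]
  generalize fderiv ℝ (fderiv ℝ u) x = B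
  nth_rw 4 5 [hx]
  simp [Fin.sum_univ_two]
  ring

/-- The function `2z ∂_z u = (r∂_r - i∂_θ) u`. -/
def polarGrad (u : E2 → ℝ) (x : E2) : ℂ :=
  fderiv ℝ u x x - Complex.I * fderiv ℝ u x (rot x)

theorem polarGrad_zero (u : E2 → ℝ) : polarGrad u 0 = 0 := by
  simp [polarGrad]

theorem polarGrad_sub_const (u : E2 → ℝ) (c : ℝ) : polarGrad (fun x => u x - c) = polarGrad u := by
  funext x
  simp only [polarGrad, fderiv_sub_const]

theorem re_polarGrad (u : E2 → ℝ) (x : E2) : (polarGrad u x).re = fderiv ℝ u x x := by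
  simp [polarGrad]

variable {u : E2 → ℝ} {δ : ℝ}

theorem continuousOn_lap (hu : ContDiffOn ℝ 2 u (ball 0 δ)) : ContinuousOn (lap u) (ball 0 δ) := by
  have hpartial (v : E2) : ContDiffOn ℝ 1 (fun x => fderiv ℝ u x v) (ball 0 δ) :=
    (hu.fderiv_of_isOpen isOpen_ball le_rfl).clm_apply contDiffOn_const
  exact continuousOn_finsetSum _ fun i _ =>
    ((hpartial _).continuousOn_fderiv_of_isOpen isOpen_ball le_rfl).clm_apply continuousOn_const

theorem fderiv_polarGrad {x : E2} (hu : ContDiffAt ℝ 2 u x) (v : E2) :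
    fderiv ℝ (polarGrad u) x v =
      (fderiv ℝ (fderiv ℝ u) x v x + fderiv ℝ u x v : ℝ) -
        Complex.I * (fderiv ℝ (fderiv ℝ u) x v (rot x) + fderiv ℝ u x (rot v) : ℝ) := by
  have hdiff (A : E2 →L[ℝ] E2) : DifferentiableAt ℝ (fun y => fderiv ℝ u y (A y)) x :=
    ((hu.fderiv_right (m := 1) le_rfl).differentiableAt one_ne_zero).clm_apply A.differentiableAt
  have hcast (A : E2 →L[ℝ] E2) : DifferentiableAt ℝ (fun y => (fderiv ℝ u y (A y) : ℂ)) x :=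
    Complex.ofRealCLM.differentiableAt.comp x (hdiff A)
  have hcomp (A : E2 →L[ℝ] E2) : fderiv ℝ (fun y => (fderiv ℝ u y (A y) : ℂ)) x v =
      (fderiv ℝ (fderiv ℝ u) x v (A x) + fderiv ℝ u x (A v) : ℝ) := by
    rw [fderiv_ofReal_comp_apply (hdiff A), fderiv_fderiv_apply_clm hu]
  have hid := hcomp (.id ℝ E2)
  have hid' := hcast (.id ℝ E2)
  simp only [ContinuousLinearMap.id_apply] at hid hid'
  rw [show polarGrad u = fun y => (fderiv ℝ u y y : ℂ) - Complex.I * fderiv ℝ u y (rot y) from rfl,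
    fderiv_fun_sub hid' ((hcast rot).const_mul _), fderiv_const_mul (hcast rot),
    sub_apply, smul_apply, hid, hcomp rot, smul_eq_mul]

theorem hasPolarDbar_polarGrad (hu : ContDiffOn ℝ 2 u (ball 0 δ)) :
    HasPolarDbar δ (polarGrad u) (fun x => lap u x) where
  contDiffOn := by
    have hdu : ContDiffOn ℝ 1 (fderiv ℝ u) (ball 0 δ) := hu.fderiv_of_isOpen isOpen_ball le_rfl
    exact (Complex.ofRealCLM.contDiff.comp_contDiffOn (hdu.clm_apply contDiffOn_id)).sub
      (contDiffOn_const.mul (Complex.ofRealCLM.contDiff.comp_contDiffOn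
        (hdu.clm_apply rot.contDiff.contDiffOn)))
  continuousOn := Complex.continuous_ofReal.comp_continuousOn (continuousOn_lap hu)
  fderiv_add x hx := by
    have hux := hu.contDiffAt (isOpen_ball.mem_nhds hx)
    have hsymm := hux.isSymmSndFDerivAt (by simp) (rot x) x
    rw [fderiv_polarGrad hux, fderiv_polarGrad hux, rot_rot, map_neg, hsymm,
      ← Complex.ofReal_pow, ← Complex.ofReal_mul, norm_sq_mul_lap hux]
    push_cast
    linear_combination -(fderiv ℝ (fderiv ℝ u) x (rot x) (rot x) - fderiv ℝ u x x) * Complex.I_sq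

theorem circCoeff_conj (H : E2 → ℂ) (n : ℤ) (r : ℝ) :
    circCoeff n (fun x => conj (H x)) r = conj (circCoeff (-n) H r) :=
  fourierCoeffOn_conj _ _ _

theorem circCoeff_polarGrad_sub (hu : ContDiffOn ℝ 2 u (ball 0 δ)) {r : ℝ} (hr : r ∈ Ico 0 δ)
    (n : ℤ) :
    circCoeff n (polarGrad u) r - conj (circCoeff (-n) (polarGrad u) r) =
      2 * n * circCoeff n (fun x => (u x : ℂ)) r := by
  have hdu : ContinuousOn (fun x => fderiv ℝ u x (rot x)) (ball 0 δ) :=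
    ((hu.fderiv_of_isOpen (m := 1) isOpen_ball le_rfl).continuousOn).clm_apply
      rot.continuous.continuousOn
  have hu' : ContDiffOn ℝ 1 (fun x => (u x : ℂ)) (ball 0 δ) :=
    Complex.ofRealCLM.contDiff.comp_contDiffOn (hu.of_le one_le_two)
  have hpoint : (fun θ => polarGrad u (circ r θ)) = fun θ => conj (polarGrad u (circ r θ)) +
      -(2 * Complex.I) * (fderiv ℝ u (circ r θ) (rot (circ r θ)) : ℂ) := by
    funext θ
    simp only [polarGrad, map_sub, map_mul, Complex.conj_ofReal, Complex.conj_I]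
    ring
  have hcast (θ : ℝ) : (fderiv ℝ u (circ r θ) (rot (circ r θ)) : ℂ) =
      fderiv ℝ (fun x => (u x : ℂ)) (circ r θ) (rot (circ r θ)) :=
    (fderiv_ofReal_comp_apply ((hu.contDiffAt (isOpen_ball.mem_nhds
      (circ_mem_ball hr θ))).differentiableAt two_ne_zero) _).symm
  have hG := (hasPolarDbar_polarGrad hu).contDiffOn.continuousOn
  rw [← circCoeff_conj, circCoeff, hpoint, fourierCoeffOn_add, fourierCoeffOn.const_mul,
    ← circCoeff.eq_1 n (fun x => conj (polarGrad u x)), funext hcast,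
    ← circCoeff.eq_1 n (fun x => fderiv ℝ (fun x => (u x : ℂ)) x (rot x)),
    circCoeff_fderiv_rot hu' hr]
  · linear_combination -(2 * n * circCoeff n (fun x => (u x : ℂ)) r) * Complex.I_sq
  · exact (Complex.continuous_conj.comp (continuous_comp_circ hG hr)).intervalIntegrable _ _
  · exact ((Complex.continuous_ofReal.comp
      (continuous_comp_circ hdu hr)).const_mul _).intervalIntegrable _ _

theorem norm_circCoeff_polarGrad_le (hu : ContDiffOn ℝ 2 u (ball 0 δ)) {r : ℝ} (hr : r ∈ Ico 0 δ)
    {c K : ℝ} (hK : ∀ x ∈ sphere (0 : E2) r, |u x - c| ≤ K) (n : ℕ) :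
    ‖circCoeff n (polarGrad u) r‖ ≤ ‖circCoeff (-n) (polarGrad u) r‖ + 2 * n * K := by
  have hv : ContDiffOn ℝ 2 (fun x => u x - c) (ball 0 δ) := hu.sub contDiffOn_const
  have hbound : ‖circCoeff n (fun x => ((u x - c : ℝ) : ℂ)) r‖ ≤ K := by
    refine (norm_circCoeff_le (g := fun _ => K) (Complex.continuous_ofReal.comp
      (continuous_comp_circ hv.continuousOn hr)) continuous_const (fun θ => ?_) n).trans_eq ?_
    · rw [Complex.norm_real]
      exact hK _ (by rw [mem_sphere_zero_iff_norm, norm_circ, abs_of_nonneg hr.1])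
    · simp only [sphAvg, intervalIntegral.integral_const, sub_zero, smul_eq_mul]
      exact inv_mul_cancel_left₀ Real.two_pi_pos.ne' K
  have hsub := circCoeff_polarGrad_sub hv hr n
  rw [polarGrad_sub_const, sub_eq_iff_eq_add'] at hsub
  rw [hsub]
  refine (norm_add_le _ _).trans ?_
  rw [RCLike.norm_conj, norm_mul, norm_mul, Int.cast_natCast, RCLike.norm_natCast,
    RCLike.norm_ofNat]
  gcongr

end PolarGradient

section Pohozaev

variable {δ C r : ℝ} {u f g : E2 → ℝ}

theorem memLp_comp_circ {H : E2 → ℂ} (hH : ContinuousOn H (ball 0 δ)) (hr : r ∈ Ico 0 δ)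
    (a b : ℝ) (p : ℝ≥0∞) :
    MemLp (fun θ => H (circ r θ)) p (volume.restrict (Ioc a b)) := by
  have hcont := continuous_comp_circ hH hr
  obtain ⟨C, hC⟩ := isCompact_Icc.exists_bound_of_continuousOn (s := Icc a b) hcont.continuousOn
  exact .of_bound hcont.aestronglyMeasurable C
    ((ae_restrict_mem measurableSet_Ioc).mono fun θ hθ => hC θ (Ioc_subset_Icc_self hθ))

theorem HasPolarDbar.sq {H S : E2 → ℂ} (h : HasPolarDbar δ H S) :
    HasPolarDbar δ (fun x => H x ^ 2) (fun x => 2 * H x * S x) where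
  contDiffOn := h.contDiffOn.pow 2
  continuousOn := (h.contDiffOn.continuousOn.const_mul 2).mul h.continuousOn
  fderiv_add x hx := by
    have hdiff := (h.contDiffOn.contDiffAt (isOpen_ball.mem_nhds hx)).differentiableAt one_ne_zero
    rw [fderiv_fun_pow 2 hdiff]
    simp only [smul_apply, smul_eq_mul]
    push_cast
    linear_combination 2 * H x * h.fderiv_add x hx

theorem hasPolarDbar_norm_sq_mul (hg : ContDiffOn ℝ 1 g (ball 0 δ)) :
    HasPolarDbar δ (fun x => (‖x‖ ^ 2 * g x : ℝ))
      (fun x => (2 * g x + fderiv ℝ g x x : ℝ) + Complex.I * fderiv ℝ g x (rot x)) where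
  contDiffOn := Complex.ofRealCLM.contDiff.comp_contDiffOn ((contDiff_norm_sq ℝ).contDiffOn.mul hg)
  continuousOn := by
    have hdg := hg.continuousOn_fderiv_of_isOpen isOpen_ball le_rfl
    exact (Complex.continuous_ofReal.comp_continuousOn ((hg.continuousOn.const_mul 2).add
      (hdg.clm_apply continuousOn_id))).add ((Complex.continuous_ofReal.comp_continuousOn
        (hdg.clm_apply rot.continuous.continuousOn)).const_mul _)
  fderiv_add x hx := by
    have hdiff := (hg.contDiffAt (isOpen_ball.mem_nhds hx)).differentiableAt one_ne_zero
    have hderiv := (hasStrictFDerivAt_norm_sq x).hasFDerivAt.fun_mul hdiff.hasFDerivAt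
    rw [fderiv_ofReal_comp_apply hderiv.differentiableAt,
      fderiv_ofReal_comp_apply hderiv.differentiableAt, hderiv.fderiv]
    simp [inner_rot_self]
    ring

theorem integrableOn_ball (hf : ContinuousOn f (ball 0 δ)) (hr : r < δ) :
    IntegrableOn f (ball (0 : E2) r) :=
  ((hf.mono (closedBall_subset_ball hr)).integrableOn_compact
    (isCompact_closedBall 0 r)).mono_set ball_subset_closedBall

theorem diskMass_add (hf : ContinuousOn f (ball 0 δ)) (hg : ContinuousOn g (ball 0 δ))
    (hr : r < δ) : diskMass (fun x => f x + g x) r = diskMass f r + diskMass g r := by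
  rw [diskMass, integral_add (integrableOn_ball hf hr) (integrableOn_ball hg hr), mul_add]
  rfl

theorem diskMass_const_mul (c : ℝ) (f : E2 → ℝ) (r : ℝ) :
    diskMass (fun x => c * f x) r = c * diskMass f r := by
  rw [diskMass, integral_const_mul, mul_left_comm]
  rfl

theorem diskMass_mono (hf : ContinuousOn f (ball 0 δ)) (hg : ContinuousOn g (ball 0 δ)) (hr : r < δ)
    (hfg : ∀ x ∈ ball (0 : E2) r, f x ≤ g x) : diskMass f r ≤ diskMass g r :=
  mul_le_mul_of_nonneg_left (setIntegral_mono_on (integrableOn_ball hf hr)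
    (integrableOn_ball hg hr) measurableSet_ball hfg) (inv_nonneg.2 Real.two_pi_pos.le)

theorem abs_diskMass_le (hf : ContinuousOn f (ball 0 δ)) (hg : ContinuousOn g (ball 0 δ))
    (hr : r < δ) (hfg : ∀ x ∈ ball (0 : E2) r, |f x| ≤ g x) :
    |diskMass f r| ≤ diskMass g r := by
  refine (abs_mul _ _).trans_le ((mul_le_mul_of_nonneg_left abs_integral_le_integral_abs
    (abs_nonneg _)).trans ?_)
  rw [abs_of_pos (inv_pos.2 Real.two_pi_pos)]
  exact diskMass_mono hf.abs hg hr hfg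

/-- The divergence theorem for the vector field `x ↦ g x • x`. -/
theorem sq_mul_sphAvg (hg : ContDiffOn ℝ 1 g (ball 0 δ)) (hr : r ∈ Ico 0 δ) :
    r ^ 2 * sphAvg g r = diskMass (fun x => 2 * g x + fderiv ℝ g x x) r := by
  have hre := (hasPolarDbar_norm_sq_mul hg).re_circCoeff_zero (by simp) hr
  rw [circCoeff_zero_ofReal, Complex.ofReal_re] at hre
  simpa [sphAvg, norm_circ, mul_left_comm] using hre

theorem re_circCoeff_zero_polarGrad_sq (hu : ContDiffOn ℝ 2 u (ball 0 δ)) (hr : r ∈ Ico 0 δ) :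
    (circCoeff 0 (fun x => polarGrad u x ^ 2) r).re =
      2 * diskMass (fun x => lap u x * fderiv ℝ u x x) r := by
  rw [(hasPolarDbar_polarGrad hu).sq.re_circCoeff_zero (by simp [polarGrad_zero]) hr,
    ← diskMass_const_mul]
  congr 1
  funext x
  rw [Complex.re_mul_ofReal, ← re_polarGrad, ← Complex.ofReal_ofNat, Complex.re_ofReal_mul]
  ring

/-- Data for an approximate Pohozaev identity: `g` dominates `Δu`, and the radial derivative of `g`
is `-Δu` times that of `u` up to a multiple of `g` itself. For `Δu = h₂e^{-u} - h₁e^u` one takes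
`g = h₁e^u + h₂e^{-u}`; the error then comes from the gradients of `h₁` and `h₂`. -/
structure PohozaevMajorant (δ C : ℝ) (u g : E2 → ℝ) : Prop where
  contDiffOn_two : ContDiffOn ℝ 2 u (ball 0 δ)
  contDiffOn_one : ContDiffOn ℝ 1 g (ball 0 δ)
  abs_lap_le : ∀ x ∈ ball (0 : E2) δ, |lap u x| ≤ g x
  abs_fderiv_add_le : ∀ x ∈ ball (0 : E2) δ,
    |lap u x * fderiv ℝ u x x + fderiv ℝ g x x| ≤ C * ‖x‖ * g x

namespace PohozaevMajorant

variable (h : PohozaevMajorant δ C u g)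
include h

theorem nonneg : ∀ x ∈ ball (0 : E2) δ, 0 ≤ g x := fun x hx =>
  (abs_nonneg _).trans (h.abs_lap_le x hx)

theorem abs_re_circCoeff_zero_le (hC : 0 ≤ C) (hr : r ∈ Ico 0 δ) :
    |(circCoeff 0 (fun x => polarGrad u x ^ 2) r).re / 2 + r ^ 2 * sphAvg g r -
      2 * diskMass g r| ≤ C * r * diskMass g r := by
  have hg := h.contDiffOn_one.continuousOn
  have hdg : ContinuousOn (fun x => fderiv ℝ g x x) (ball 0 δ) :=
    (h.contDiffOn_one.continuousOn_fderiv_of_isOpen isOpen_ball le_rfl).clm_apply continuousOn_id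
  have hdu : ContinuousOn (fun x => lap u x * fderiv ℝ u x x) (ball 0 δ) :=
    (continuousOn_lap h.contDiffOn_two).mul ((h.contDiffOn_two.continuousOn_fderiv_of_isOpen
      isOpen_ball one_le_two).clm_apply continuousOn_id)
  rw [re_circCoeff_zero_polarGrad_sq h.contDiffOn_two hr, mul_div_cancel_left₀ _ two_ne_zero,
    sq_mul_sphAvg h.contDiffOn_one hr, diskMass_add (hg.const_mul 2) hdg hr.2,
    diskMass_const_mul, add_sub_assoc, add_sub_cancel_left, ← diskMass_add hdu hdg hr.2,
    ← diskMass_const_mul]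
  refine abs_diskMass_le (hdu.add hdg) (hg.const_mul (C * r)) hr.2 fun x hx => ?_
  have hx' : x ∈ ball (0 : E2) δ := ball_subset_ball hr.2.le hx
  have := h.nonneg x hx'
  refine (h.abs_fderiv_add_le x hx').trans ?_
  gcongr
  exact (mem_ball_zero_iff.1 hx).le

theorem ofReal_abs_sub_le_tsum (hC : 0 ≤ C) (hr : r ∈ Ico 0 δ) :
    ENNReal.ofReal |diskMass (lap u) r ^ 2 / 2 - 2 * diskMass g r| ≤
      ENNReal.ofReal (C * r * diskMass g r + r ^ 2 * sphAvg g r) +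
        ∑' n : ℕ, ‖circCoeff (-(n + 1 : ℕ)) (polarGrad u) r‖ₑ *
          ‖circCoeff (n + 1 : ℕ) (polarGrad u) r‖ₑ := by
  have hG := hasPolarDbar_polarGrad h.contDiffOn_two
  set a := circCoeff 0 (fun x => polarGrad u x ^ 2) r
  set m := diskMass (lap u) r
  have hpars : ENNReal.ofReal ‖a - m ^ 2‖ ≤ 2 * ∑' n : ℕ,
      ‖circCoeff (-(n + 1 : ℕ)) (polarGrad u) r‖ₑ * ‖circCoeff (n + 1 : ℕ) (polarGrad u) r‖ₑ := by
    rw [← hG.circCoeff_zero_eq_diskMass (polarGrad_zero u) rfl hr, ofReal_norm]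
    exact enorm_fourierCoeffOn_sq_sub_sq_le Real.two_pi_pos
      (memLp_comp_circ hG.contDiffOn.continuousOn hr 0 (2 * Real.pi) 2)
  have hre : |m ^ 2 / 2 - a.re / 2| ≤ ‖a - m ^ 2‖ / 2 := by
    rw [← sub_div, abs_div, abs_two, abs_sub_comm]
    gcongr
    rw [← Complex.ofReal_re (m ^ 2), ← Complex.sub_re, Complex.ofReal_pow]
    exact Complex.abs_re_le_norm _
  have hreal : |m ^ 2 / 2 - 2 * diskMass g r| ≤
      C * r * diskMass g r + r ^ 2 * sphAvg g r + ‖a - m ^ 2‖ / 2 := by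
    have hsph : 0 ≤ r ^ 2 * sphAvg g r := mul_nonneg (sq_nonneg r) (sphAvg_nonneg h.nonneg hr)
    have hpoh := abs_le.1 (h.abs_re_circCoeff_zero_le hC hr)
    have hre' := abs_le.1 hre
    exact abs_le.2 ⟨by linarith, by linarith⟩
  refine (ENNReal.ofReal_le_ofReal hreal).trans (ENNReal.ofReal_add_le.trans ?_)
  gcongr
  rw [ENNReal.ofReal_div_of_pos two_pos, ENNReal.ofReal_ofNat]
  exact ENNReal.div_le_of_le_mul' hpars

end PohozaevMajorant

end Pohozaev

section CauchyKernel

theorem tsum_ofReal_pow_mul_ofReal_pow {r ρ ρ' : ℝ} (hρ : 0 ≤ ρ) (hr : 0 < r) (hρρ' : ρ < ρ') :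
    ∑' n : ℕ, ENNReal.ofReal ((ρ / r) ^ (n + 1)) * ENNReal.ofReal ((r / ρ') ^ (n + 1)) =
      ENNReal.ofReal (ρ / (ρ' - ρ)) := by
  have hρ' : 0 < ρ' := hρ.trans_lt hρρ'
  have hq : ρ / ρ' < 1 := (div_lt_one hρ').2 hρρ'
  have hsum : HasSum (fun n : ℕ => (ρ / ρ') ^ (n + 1)) (ρ / (ρ' - ρ)) := by
    convert! (hasSum_geometric_of_lt_one (by positivity) hq).mul_left (ρ / ρ') using 1
    · exact funext fun n => pow_succ' _ _
    · have := sub_ne_zero.2 hρρ'.ne'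
      field_simp
  rw [← hsum.tsum_eq, ENNReal.ofReal_tsum_of_nonneg (fun n => by positivity) hsum.summable]
  refine tsum_congr fun n => ?_
  rw [← ENNReal.ofReal_mul (by positivity), ← mul_pow, div_mul_div_cancel₀ hr.ne']

variable {r R s L : ℝ} (ν : Measure ℝ) [SFinite ν]

theorem tsum_lintegral_mul_lintegral (hr : 0 < r) :
    ∑' n : ℕ, (∫⁻ ρ in Ioc 0 r, ENNReal.ofReal ((ρ / r) ^ (n + 1)) ∂ν) *
        (∫⁻ ρ in Ioc r R, ENNReal.ofReal ((r / ρ) ^ (n + 1)) ∂ν) =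
      ∫⁻ p in Ioc 0 r ×ˢ Ioc r R, ENNReal.ofReal (p.1 / (p.2 - p.1)) ∂ν.prod ν := by
  have hmeas (n : ℕ) : AEMeasurable (fun p : ℝ × ℝ =>
      ENNReal.ofReal ((p.1 / r) ^ (n + 1)) * ENNReal.ofReal ((r / p.2) ^ (n + 1)))
      ((ν.prod ν).restrict (Ioc 0 r ×ˢ Ioc r R)) := by fun_prop
  calc _ = ∑' n : ℕ, ∫⁻ p in Ioc 0 r ×ˢ Ioc r R,
        ENNReal.ofReal ((p.1 / r) ^ (n + 1)) * ENNReal.ofReal ((r / p.2) ^ (n + 1)) ∂ν.prod ν := by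
        refine tsum_congr fun n => ?_
        rw [← Measure.prod_restrict]
        exact (lintegral_prod_mul (f := fun ρ => ENNReal.ofReal ((ρ / r) ^ (n + 1)))
          (g := fun ρ => ENNReal.ofReal ((r / ρ) ^ (n + 1))) (by fun_prop) (by fun_prop)).symm
    _ = _ := by
        rw [← lintegral_tsum hmeas]
        refine setLIntegral_congr_fun (measurableSet_Ioc.prod measurableSet_Ioc) fun p hp => ?_
        exact tsum_ofReal_pow_mul_ofReal_pow hp.1.1.le hr (hp.1.2.trans_lt hp.2.1)

theorem ofReal_div_mul_volume_le (hL : 1 < L) (p : ℝ × ℝ) :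
    ENNReal.ofReal (p.1 / (p.2 - p.1)) * volume.restrict (Ioc s (2 * s)) (Ico p.1 p.2) ≤
      ENNReal.ofReal (2 * s) *
          (Ioc (s / L) (2 * s * L) ×ˢ Ioc (s / L) (2 * s * L)).indicator 1 p +
        ENNReal.ofReal (s / (L - 1)) := by
  obtain ⟨ρ, ρ'⟩ := p
  rw [Measure.restrict_apply measurableSet_Ico]
  rcases (Ico ρ ρ' ∩ Ioc s (2 * s)).eq_empty_or_nonempty with hempty | ⟨r, hr, hrs⟩
  · simp [hempty]
  have hρρ' : 0 < ρ' - ρ := sub_pos.2 (hr.1.trans_lt hr.2)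
  by_cases hmem : s / L < ρ ∧ ρ' ≤ 2 * s * L
  · have hρ : ρ ∈ Ioc (s / L) (2 * s * L) := ⟨hmem.1, by linarith [hmem.2]⟩
    have hρ' : ρ' ∈ Ioc (s / L) (2 * s * L) := ⟨by linarith [hmem.1], hmem.2⟩
    refine le_add_right ?_
    rw [indicator_of_mem (mk_mem_prod hρ hρ'), Pi.one_apply, mul_one]
    calc _ ≤ ENNReal.ofReal (ρ / (ρ' - ρ)) * ENNReal.ofReal (ρ' - ρ) := by
          rw [← Real.volume_Ico]
          gcongr
          exact inter_subset_left
      _ = ENNReal.ofReal ρ := by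
          rw [← ENNReal.ofReal_mul' hρρ'.le, div_mul_cancel₀ _ hρρ'.ne']
      _ ≤ _ := ENNReal.ofReal_le_ofReal (hr.1.trans hrs.2)
  · have hfar : ρ / (ρ' - ρ) ≤ 1 / (L - 1) := by
      have hLρ : ρ * L ≤ ρ' := by
        rcases not_and_or.1 hmem with hρ | hρ'
        · linarith [(le_div_iff₀ (one_pos.trans hL)).1 (not_lt.1 hρ), hrs.1, hr.2]
        · nlinarith [hrs.2, hr.1]
      rw [div_le_div_iff₀ hρρ' (sub_pos.2 hL)]
      linarith
    refine le_add_left ?_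
    calc _ ≤ ENNReal.ofReal (1 / (L - 1)) * volume (Ioc s (2 * s)) := by
          gcongr
          exact inter_subset_right
      _ = _ := by
          rw [Real.volume_Ioc, ← ENNReal.ofReal_mul (one_div_nonneg.2 (sub_pos.2 hL).le)]
          ring_nf

theorem lintegral_tsum_lintegral_mul_lintegral_le (hs : 0 < s) (hL : 1 < L) (R : ℝ) :
    ∫⁻ r in Ioc s (2 * s), ∑' n : ℕ, (∫⁻ ρ in Ioc 0 r, ENNReal.ofReal ((ρ / r) ^ (n + 1)) ∂ν) *
        (∫⁻ ρ in Ioc r R, ENNReal.ofReal ((r / ρ) ^ (n + 1)) ∂ν) ≤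
      ENNReal.ofReal (2 * s) * ν (Ioc (s / L) (2 * s * L)) ^ 2 +
        ENNReal.ofReal (s / (L - 1)) * ν univ ^ 2 := by
  let k : ℝ × ℝ → ℝ≥0∞ := fun p => ENNReal.ofReal (p.1 / (p.2 - p.1))
  have hk : Measurable k := by fun_prop
  have hmeas : AEMeasurable (Function.uncurry fun (r : ℝ) (p : ℝ × ℝ) =>
      (Ico p.1 p.2).indicator (fun _ => k p) r)
      ((volume.restrict (Ioc s (2 * s))).prod (ν.prod ν)) :=
    ((hk.comp measurable_snd).indicator ((measurableSet_le (by fun_prop) measurable_fst).inter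
      (measurableSet_lt measurable_fst (by fun_prop)))).aemeasurable
  calc _ ≤ ∫⁻ r in Ioc s (2 * s), ∫⁻ p, (Ico p.1 p.2).indicator (fun _ => k p) r ∂ν.prod ν := by
        refine setLIntegral_mono' measurableSet_Ioc fun r hr => ?_
        rw [tsum_lintegral_mul_lintegral ν (hs.trans hr.1),
          ← lintegral_indicator (measurableSet_Ioc.prod measurableSet_Ioc)]
        refine lintegral_mono fun p => indicator_apply_le' (fun hp => ?_) fun _ => zero_le
        rw [indicator_of_mem (show r ∈ Ico p.1 p.2 from ⟨hp.1.2, hp.2.1⟩)]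
    _ = ∫⁻ p, k p * volume.restrict (Ioc s (2 * s)) (Ico p.1 p.2) ∂ν.prod ν := by
        rw [lintegral_lintegral_swap hmeas]
        simp only [lintegral_indicator_const measurableSet_Ico]
    _ ≤ ∫⁻ p, ENNReal.ofReal (2 * s) *
          (Ioc (s / L) (2 * s * L) ×ˢ Ioc (s / L) (2 * s * L)).indicator 1 p +
        ENNReal.ofReal (s / (L - 1)) ∂ν.prod ν :=
        lintegral_mono (ofReal_div_mul_volume_le hL)
    _ = _ := by
        have hI : MeasurableSet (Ioc (s / L) (2 * s * L) ×ˢ Ioc (s / L) (2 * s * L)) :=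
          measurableSet_Ioc.prod measurableSet_Ioc
        rw [lintegral_add_right _ measurable_const, lintegral_const, lintegral_const_mul _
          (measurable_one.indicator hI), lintegral_indicator_one hI, ← univ_prod_univ,
          Measure.prod_prod, Measure.prod_prod, sq, sq]

end CauchyKernel

theorem tsum_ofReal_mul_pow_le {x : ℝ} (hx : 0 ≤ x) (hx2 : x ≤ 1 / 2) :
    ∑' n : ℕ, ENNReal.ofReal ((n + 1) * x ^ (n + 1)) ≤ ENNReal.ofReal (4 * x) := by
  have hsum : HasSum (fun n : ℕ => ((n : ℝ) + 1) * x ^ (n + 1)) (x / (1 - x) ^ 2) := by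
    have h := (hasSum_nat_add_iff' 1).2 (hasSum_coe_mul_geometric_of_norm_lt_one
      (r := x) (by rw [Real.norm_of_nonneg hx]; linarith))
    simpa using h
  rw [← ENNReal.ofReal_tsum_of_nonneg (fun n => by positivity) hsum.summable, hsum.tsum_eq]
  refine ENNReal.ofReal_le_ofReal ((div_le_iff₀ (by nlinarith)).2 ?_)
  have : 1 / 4 ≤ (1 - x) ^ 2 := by nlinarith
  nlinarith

section AveragedEstimate

theorem diskMass_mono_radius {δ s t : ℝ} {f : E2 → ℝ} (hf : ContinuousOn f (ball 0 δ))
    (hf0 : ∀ x ∈ ball (0 : E2) δ, 0 ≤ f x) (hst : s ≤ t) (ht : t < δ) :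
    diskMass f s ≤ diskMass f t :=
  mul_le_mul_of_nonneg_left (setIntegral_mono_set (integrableOn_ball hf ht)
    ((ae_restrict_mem measurableSet_ball).mono fun x hx => hf0 x (ball_subset_ball ht.le hx))
    (ball_subset_ball hst).eventuallyLE) (inv_nonneg.2 Real.two_pi_pos.le)

theorem abs_diskMass_sub_le {δ s t : ℝ} {f g : E2 → ℝ} (hf : ContinuousOn f (ball 0 δ))
    (hg : ContinuousOn g (ball 0 δ)) (hfg : ∀ x ∈ ball (0 : E2) δ, |f x| ≤ g x) (hst : s ≤ t)
    (ht : t < δ) : |diskMass f t - diskMass f s| ≤ diskMass g t - diskMass g s := by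
  have hf' := hf.const_mul (-1)
  have hadd := diskMass_mono_radius (f := fun x => g x + f x) (hg.add hf)
    (fun x hx => by linarith [(abs_le.1 (hfg x hx)).1]) hst ht
  have hsub := diskMass_mono_radius (f := fun x => g x + -1 * f x) (hg.add hf')
    (fun x hx => by linarith [(abs_le.1 (hfg x hx)).2]) hst ht
  rw [diskMass_add hg hf (hst.trans_lt ht), diskMass_add hg hf ht] at hadd
  rw [diskMass_add hg hf' (hst.trans_lt ht), diskMass_add hg hf' ht, diskMass_const_mul,
    diskMass_const_mul] at hsub
  exact abs_le.2 ⟨by linarith, by linarith⟩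

theorem lintegral_sq_mul_sphAvg_le {δ s t : ℝ} {g : E2 → ℝ} (hg : ContinuousOn g (ball 0 δ))
    (hg0 : ∀ x ∈ ball (0 : E2) δ, 0 ≤ g x) (hs : 0 ≤ s) (hst : s ≤ t) (ht : t < δ) :
    ∫⁻ r in Ioc s t, ENNReal.ofReal (r ^ 2 * sphAvg g r) ≤
      ENNReal.ofReal (t * (diskMass g t - diskMass g s)) := by
  calc _ ≤ ∫⁻ r in Ioc s t, ENNReal.ofReal t * (ENNReal.ofReal (r * sphAvg g r) * 1) := by
        refine setLIntegral_mono' measurableSet_Ioc fun r hr => ?_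
        have hr0 : 0 ≤ r := hs.trans hr.1.le
        have hsph := sphAvg_nonneg hg0 ⟨hr0, hr.2.trans_lt ht⟩
        rw [mul_one, ← ENNReal.ofReal_mul (hs.trans hst), sq, mul_assoc]
        exact ENNReal.ofReal_le_ofReal (mul_le_mul_of_nonneg_right hr.2 (mul_nonneg hr0 hsph))
    _ = _ := by
        rw [lintegral_const_mul' _ _ ENNReal.ofReal_ne_top,
          ← setLIntegral_radialMeasure hg hs le_rfl ht, setLIntegral_one,
          radialMeasure_Ioc hg hg0 hs hst le_rfl ht, ENNReal.ofReal_mul (hs.trans hst)]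

namespace PohozaevMajorant

variable {δ C R c K : ℝ} {u g : E2 → ℝ} (h : PohozaevMajorant δ C u g)
include h

theorem norm_lap_le : ∀ x ∈ ball (0 : E2) δ, ‖(lap u x : ℂ)‖ ≤ g x := fun x hx =>
  (Complex.norm_real _).trans_le (h.abs_lap_le x hx)

theorem diskMass_nonneg {r : ℝ} (hr : r < δ) : 0 ≤ diskMass g r :=
  mul_nonneg (inv_nonneg.2 Real.two_pi_pos.le)
    (setIntegral_nonneg measurableSet_ball fun x hx => h.nonneg x (ball_subset_ball hr.le hx))

theorem norm_circCoeff_neg_le {r : ℝ} (hr0 : 0 < r) (hr : r ≤ R) (hR : R < δ) (n : ℕ) :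
    ‖circCoeff (-(n + 1 : ℕ)) (polarGrad u) r‖ ≤ diskMass g R := by
  have hg := h.contDiffOn_one.continuousOn
  rw [← ENNReal.ofReal_le_ofReal_iff (h.diskMass_nonneg hR), ofReal_norm,
    ← radialMeasure_univ hg h.nonneg (hr0.le.trans hr) hR, ← setLIntegral_one]
  refine ((hasPolarDbar_polarGrad h.contDiffOn_two).enorm_circCoeff_neg_le hg h.norm_lap_le hR
    hr0 hr n).trans ((setLIntegral_mono' measurableSet_Ioc fun ρ hρ => ?_).trans
      (lintegral_mono_set (subset_univ _)))
  exact ENNReal.ofReal_le_one.2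
    (pow_le_one₀ (div_nonneg hρ.1.le hr0.le) ((div_le_one hr0).2 hρ.2))

theorem norm_circCoeff_succ_le (hR0 : 0 < R) (hR : R < δ)
    (hK : ∀ x ∈ sphere (0 : E2) R, |u x - c| ≤ K) (n : ℕ) :
    ‖circCoeff (n + 1 : ℕ) (polarGrad u) R‖ ≤ (n + 1) * (diskMass g R + 2 * K) := by
  have hneg := h.norm_circCoeff_neg_le hR0 le_rfl hR n
  have hpos := norm_circCoeff_polarGrad_le h.contDiffOn_two ⟨hR0.le, hR⟩ hK (n + 1)
  have hM : 0 ≤ n * diskMass g R := mul_nonneg n.cast_nonneg (h.diskMass_nonneg hR)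
  push_cast at hneg hpos ⊢
  linarith

theorem tsum_enorm_circCoeff_boundary_le {r : ℝ} (hr0 : 0 < r) (hrR : 2 * r ≤ R) (hR : R < δ)
    (hK : ∀ x ∈ sphere (0 : E2) R, |u x - c| ≤ K) :
    ∑' n : ℕ, ‖circCoeff (-(n + 1 : ℕ)) (polarGrad u) r‖ₑ *
        (ENNReal.ofReal ((r / R) ^ (n + 1)) * ‖circCoeff (n + 1 : ℕ) (polarGrad u) R‖ₑ) ≤
      ENNReal.ofReal (4 * (r / R) * (diskMass g R * (diskMass g R + 2 * K))) := by
  have hR0 : 0 < R := by linarith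
  have hM : 0 ≤ diskMass g R := h.diskMass_nonneg hR
  rw [ENNReal.ofReal_mul (by positivity)]
  refine le_trans ?_ (mul_le_mul_left (tsum_ofReal_mul_pow_le (by positivity)
    ((div_le_div_iff₀ hR0 two_pos).2 (by linarith))) _)
  rw [← ENNReal.tsum_mul_right]
  refine ENNReal.tsum_le_tsum fun n => ?_
  rw [← ofReal_norm, ← ofReal_norm, ← ENNReal.ofReal_mul (by positivity),
    ← ENNReal.ofReal_mul (by positivity), ← ENNReal.ofReal_mul (by positivity)]
  refine ENNReal.ofReal_le_ofReal ?_
  calc _ ≤ diskMass g R * ((r / R) ^ (n + 1) * ((n + 1) * (diskMass g R + 2 * K))) := by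
        gcongr
        · exact h.norm_circCoeff_neg_le hr0 (by linarith) hR n
        · exact h.norm_circCoeff_succ_le hR0 hR hK n
    _ = _ := by ring

theorem tsum_enorm_circCoeff_le {r : ℝ} (hr0 : 0 < r) (hrR : 2 * r ≤ R) (hR : R < δ)
    (hK : ∀ x ∈ sphere (0 : E2) R, |u x - c| ≤ K) :
    ∑' n : ℕ, ‖circCoeff (-(n + 1 : ℕ)) (polarGrad u) r‖ₑ *
        ‖circCoeff (n + 1 : ℕ) (polarGrad u) r‖ₑ ≤
      ENNReal.ofReal (4 * (r / R) * (diskMass g R * (diskMass g R + 2 * K))) +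
        ∑' n : ℕ, (∫⁻ ρ in Ioc 0 r, ENNReal.ofReal ((ρ / r) ^ (n + 1)) ∂radialMeasure g R) *
          ∫⁻ ρ in Ioc r R, ENNReal.ofReal ((r / ρ) ^ (n + 1)) ∂radialMeasure g R := by
  have hG := hasPolarDbar_polarGrad h.contDiffOn_two
  have hg := h.contDiffOn_one.continuousOn
  have hr : r ≤ R := by linarith
  refine le_trans (ENNReal.tsum_le_tsum fun n => ?_) (ENNReal.tsum_add.trans_le
    (add_le_add_left (h.tsum_enorm_circCoeff_boundary_le hr0 hrR hR hK) _))
  refine (mul_le_mul_right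
    (hG.enorm_circCoeff_succ_le hg h.norm_lap_le hR hr0 hr n) _).trans ?_
  rw [mul_add]
  gcongr
  exact hG.enorm_circCoeff_neg_le hg h.norm_lap_le hR hr0 hr n

theorem lintegral_tsum_enorm_circCoeff_le {s L : ℝ} (hs : 0 < s) (hL : 1 < L) (hsR : 4 * s ≤ R)
    (hsL : 2 * s * L ≤ R) (hR : R < δ) (hK : ∀ x ∈ sphere (0 : E2) R, |u x - c| ≤ K) :
    ∫⁻ r in Ioc s (2 * s), ∑' n : ℕ, ‖circCoeff (-(n + 1 : ℕ)) (polarGrad u) r‖ₑ *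
        ‖circCoeff (n + 1 : ℕ) (polarGrad u) r‖ₑ ≤
      ENNReal.ofReal (s * (8 * (s / R) * (diskMass g R * (diskMass g R + 2 * K)) +
        2 * (diskMass g (2 * s * L) - diskMass g (s / L)) ^ 2 + diskMass g R ^ 2 / (L - 1))) := by
  have hg := h.contDiffOn_one.continuousOn
  have hR0 : 0 < R := by linarith
  have hM : 0 ≤ diskMass g R := h.diskMass_nonneg hR
  have hK0 : 0 ≤ K := (abs_nonneg _).trans (hK (circ R 0) (by simp [norm_circ, hR0.le]))
  have hdiv : s / L ≤ 2 * s * L := (div_le_self hs.le hL.le).trans (by nlinarith)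
  have hnear : 0 ≤ diskMass g (2 * s * L) - diskMass g (s / L) :=
    sub_nonneg.2 (diskMass_mono_radius hg h.nonneg hdiv (hsL.trans_lt hR))
  have : 0 < L - 1 := sub_pos.2 hL
  have : SFinite (radialMeasure g R) := by rw [radialMeasure]; infer_instance
  have hkernel := lintegral_tsum_lintegral_mul_lintegral_le (radialMeasure g R) hs hL R
  rw [radialMeasure_Ioc hg h.nonneg (by positivity) hdiv hsL hR,
    radialMeasure_univ hg h.nonneg hR0.le hR, ← ENNReal.ofReal_pow hnear, ← ENNReal.ofReal_pow hM,
    ← ENNReal.ofReal_mul (by positivity), ← ENNReal.ofReal_mul (by positivity),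
    ← ENNReal.ofReal_add (by positivity) (by positivity)] at hkernel
  calc _ ≤ ∫⁻ r in Ioc s (2 * s),
        (ENNReal.ofReal (8 * (s / R) * (diskMass g R * (diskMass g R + 2 * K))) + _) := by
        refine setLIntegral_mono' measurableSet_Ioc fun r hr =>
          (h.tsum_enorm_circCoeff_le (hs.trans hr.1) (by linarith [hr.2]) hR hK).trans ?_
        have hscale : 4 * (r / R) ≤ 8 * (s / R) := by
          rw [← mul_div_assoc, ← mul_div_assoc]
          exact div_le_div_of_nonneg_right (by linarith [hr.2]) hR0.le
        gcongr
    _ ≤ _ := (lintegral_add_left measurable_const _).trans_le (add_le_add_right hkernel _)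
    _ = _ := by
        rw [setLIntegral_const, Real.volume_Ioc, show 2 * s - s = s by ring,
          ← ENNReal.ofReal_mul (by positivity),
          ← ENNReal.ofReal_add (by positivity) (by positivity)]
        ring_nf

theorem abs_sub_le_abs_sub_add {s r t : ℝ} (hsr : s ≤ r) (hrt : r ≤ t) (htR : t ≤ R) (hR : R < δ) :
    |diskMass (lap u) s ^ 2 / 2 - 2 * diskMass g s| ≤
      |diskMass (lap u) r ^ 2 / 2 - 2 * diskMass g r| +
        (diskMass g R + 2) * (diskMass g t - diskMass g s) := by
  have hg := h.contDiffOn_one.continuousOn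
  have hlap := continuousOn_lap h.contDiffOn_two
  have hrR : r ≤ R := hrt.trans htR
  have hlap_le {a : ℝ} (ha : a ≤ R) : |diskMass (lap u) a| ≤ diskMass g R :=
    (abs_diskMass_le hlap hg (ha.trans_lt hR) fun x hx =>
      h.abs_lap_le x (ball_subset_ball (ha.trans hR.le) hx)).trans
      (diskMass_mono_radius hg h.nonneg ha hR)
  have hsub := abs_diskMass_sub_le hlap hg h.abs_lap_le hsr (hrR.trans_lt hR)
  have hmono := diskMass_mono_radius hg h.nonneg hsr (hrR.trans_lt hR)
  have hmono' := diskMass_mono_radius hg h.nonneg hrt (htR.trans_lt hR)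
  have hM : 0 ≤ diskMass g R := h.diskMass_nonneg hR
  set m := diskMass (lap u)
  set M := diskMass g
  have hsq : |m s ^ 2 / 2 - m r ^ 2 / 2| ≤ M R * (M t - M s) := by
    calc _ = |m s + m r| / 2 * |m r - m s| := by
          rw [abs_sub_comm, ← abs_two, ← abs_div, ← abs_mul]
          ring_nf
      _ ≤ M R * (M t - M s) := by
          gcongr
          · linarith [abs_add_le (m s) (m r), hlap_le (hsr.trans hrR), hlap_le hrR]
          · linarith
  have hsq' := abs_le.1 hsq
  have hr := abs_le.1 (le_refl |m r ^ 2 / 2 - 2 * M r|)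
  exact abs_le.2 ⟨by linarith, by linarith⟩

theorem ofReal_abs_sub_le_of_mem_Ioc {s r : ℝ} (hC : 0 ≤ C) (hs : 0 < s) (hsR : 2 * s ≤ R)
    (hR : R < δ) (hr : r ∈ Ioc s (2 * s)) :
    ENNReal.ofReal |diskMass (lap u) s ^ 2 / 2 - 2 * diskMass g s| ≤
      ENNReal.ofReal (2 * C * s * diskMass g R +
          (diskMass g R + 2) * (diskMass g (2 * s) - diskMass g s)) +
        ENNReal.ofReal (r ^ 2 * sphAvg g r) +
        ∑' n : ℕ, ‖circCoeff (-(n + 1 : ℕ)) (polarGrad u) r‖ₑ *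
          ‖circCoeff (n + 1 : ℕ) (polarGrad u) r‖ₑ := by
  have hg := h.contDiffOn_one.continuousOn
  have hr0 : 0 ≤ r := hs.le.trans hr.1.le
  have hrδ : r < δ := (hr.2.trans hsR).trans_lt hR
  have hsph : 0 ≤ r ^ 2 * sphAvg g r :=
    mul_nonneg (sq_nonneg r) (sphAvg_nonneg h.nonneg ⟨hr0, hrδ⟩)
  have hM : 0 ≤ diskMass g R := h.diskMass_nonneg hR
  have hMr : 0 ≤ diskMass g r := h.diskMass_nonneg hrδ
  have hΔ : 0 ≤ diskMass g (2 * s) - diskMass g s :=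
    sub_nonneg.2 (diskMass_mono_radius hg h.nonneg (by linarith) (hsR.trans_lt hR))
  have herror : C * r * diskMass g r ≤ 2 * C * s * diskMass g R := by
    calc _ ≤ C * (2 * s) * diskMass g R := by
          gcongr
          · exact hr.2
          · exact diskMass_mono_radius hg h.nonneg (hr.2.trans hsR) hR
      _ = _ := by ring
  refine (ENNReal.ofReal_le_ofReal (h.abs_sub_le_abs_sub_add hr.1.le hr.2 hsR hR)).trans
    (ENNReal.ofReal_add_le.trans
      ((add_le_add_left (h.ofReal_abs_sub_le_tsum hC ⟨hr0, hrδ⟩) _).trans ?_))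
  rw [add_right_comm, ← ENNReal.ofReal_add (by positivity) (by positivity),
    ← ENNReal.ofReal_add (by positivity) hsph]
  gcongr ENNReal.ofReal ?_ + _
  linarith

theorem abs_sq_half_sub_le {s L : ℝ} (hC : 0 ≤ C) (hs : 0 < s) (hL : 1 < L) (hsR : 4 * s ≤ R)
    (hsL : 2 * s * L ≤ R) (hR : R < δ) (hK : ∀ x ∈ sphere (0 : E2) R, |u x - c| ≤ K) :
    |diskMass (lap u) s ^ 2 / 2 - 2 * diskMass g s| ≤
      2 * C * s * diskMass g R + 8 * (s / R) * (diskMass g R * (diskMass g R + 2 * K)) +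
      (diskMass g R + 4) * (diskMass g (2 * s) - diskMass g s) +
      2 * (diskMass g (2 * s * L) - diskMass g (s / L)) ^ 2 + diskMass g R ^ 2 / (L - 1) := by
  have hg := h.contDiffOn_one.continuousOn
  have h2s : 2 * s < δ := by linarith
  have hR0 : 0 < R := by linarith
  have hM : 0 ≤ diskMass g R := h.diskMass_nonneg hR
  have hK0 : 0 ≤ K := (abs_nonneg _).trans (hK (circ R 0) (by simp [norm_circ, hR0.le]))
  have hΔ : 0 ≤ diskMass g (2 * s) - diskMass g s :=
    sub_nonneg.2 (diskMass_mono_radius hg h.nonneg (by linarith) h2s)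
  have : 0 < L - 1 := sub_pos.2 hL
  have hmeas : AEMeasurable (fun r => ENNReal.ofReal (r ^ 2 * sphAvg g r))
      (volume.restrict (Ioc s (2 * s))) :=
    ((((continuousOn_id.pow 2).mul (continuousOn_sphAvg hg)).mono fun r hr =>
      ⟨(hs.trans hr.1).le, hr.2.trans_lt h2s⟩).aemeasurable measurableSet_Ioc).ennreal_ofReal
  have hIoc (a : ℝ) (ha : 0 ≤ a) :
      ∫⁻ _ in Ioc s (2 * s), ENNReal.ofReal a = ENNReal.ofReal (s * a) := by
    rw [setLIntegral_const, Real.volume_Ioc, ← ENNReal.ofReal_mul ha]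
    ring_nf
  have hint := setLIntegral_mono' (μ := volume) measurableSet_Ioc fun r hr =>
    h.ofReal_abs_sub_le_of_mem_Ioc hC hs (by linarith) hR hr
  rw [lintegral_add_left' (hmeas.const_add _), lintegral_add_left measurable_const,
    hIoc _ (abs_nonneg _), hIoc _ (by positivity)] at hint
  have hsum := hint.trans (add_le_add
    (add_le_add_right (lintegral_sq_mul_sphAvg_le hg h.nonneg hs.le (by linarith) h2s) _)
    (h.lintegral_tsum_enorm_circCoeff_le hs hL hsR hsL hR hK))
  rw [← ENNReal.ofReal_add (by positivity) (by positivity),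
    ← ENNReal.ofReal_add (by positivity) (by positivity),
    ENNReal.ofReal_le_ofReal_iff (by positivity)] at hsum
  refine le_of_mul_le_mul_left (hsum.trans_eq ?_) hs
  ring

end PohozaevMajorant

end AveragedEstimate

section IteratedLimit

theorem IsBlowUpMass.add {F G : ℕ → ℝ → ℝ} {σ τ : ℝ} (hF : IsBlowUpMass F σ)
    (hG : IsBlowUpMass G τ) : IsBlowUpMass (fun k r => F k r + G k r) (σ + τ) := by
  obtain ⟨S, hS, hσ⟩ := hF
  obtain ⟨T, hT, hτ⟩ := hG
  exact ⟨fun r => S r + T r, fun r hr0 hr1 => (hS r hr0 hr1).add (hT r hr0 hr1), hσ.add hτ⟩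

theorem IsBlowUpMass.sub {F G : ℕ → ℝ → ℝ} {σ τ : ℝ} (hF : IsBlowUpMass F σ)
    (hG : IsBlowUpMass G τ) : IsBlowUpMass (fun k r => F k r - G k r) (σ - τ) := by
  obtain ⟨S, hS, hσ⟩ := hF
  obtain ⟨T, hT, hτ⟩ := hG
  exact ⟨fun r => S r - T r, fun r hr0 hr1 => (hS r hr0 hr1).sub (hT r hr0 hr1), hσ.sub hτ⟩

theorem IsBlowUpMass.congr {F G : ℕ → ℝ → ℝ} {σ : ℝ} (hF : IsBlowUpMass F σ)
    (hFG : ∀ k, ∀ r ∈ Ioo 0 1, F k r = G k r) : IsBlowUpMass G σ := by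
  obtain ⟨S, hS, hσ⟩ := hF
  exact ⟨S, fun r hr0 hr1 => (hS r hr0 hr1).congr fun k => hFG k r ⟨hr0, hr1⟩, hσ⟩

theorem IsBlowUpMass.exists_tendsto {F : ℕ → ℝ → ℝ} {r σ : ℝ} (hF : IsBlowUpMass F σ)
    (hr : r ∈ Ioo 0 1) : ∃ a, Tendsto (fun k => F k r) atTop (𝓝 a) :=
  let ⟨S, hS, _⟩ := hF
  ⟨S r, hS r hr.1 hr.2⟩

theorem sq_eq_four_mul_of_forall_abs_le {S T : ℝ → ℝ} {a b e R σ τ : ℝ}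
    (hS : Tendsto S (𝓝[>] 0) (𝓝 σ)) (hT : Tendsto T (𝓝[>] 0) (𝓝 τ)) (hR : 0 < R)
    (h : ∀ s L, 0 < s → 1 < L → 4 * s ≤ R → 2 * s * L ≤ R → |S s ^ 2 / 2 - 2 * T s| ≤
      a * s + b * (T (2 * s) - T s) + 2 * (T (2 * s * L) - T (s / L)) ^ 2 + e / (L - 1)) :
    σ ^ 2 = 4 * τ := by
  have hbound (L : ℝ) (hL : 1 < L) : |σ ^ 2 / 2 - 2 * τ| ≤ e / (L - 1) := by
    have hL0 : 0 < L := one_pos.trans hL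
    have hscale {c : ℝ} (hc : 0 < c) : Tendsto (fun s => T (c * s)) (𝓝[>] 0) (𝓝 τ) :=
      hT.comp (tendsto_iff_comap.2 (comap_mulLeft_nhdsGT_zero hc).ge)
    have has : Tendsto (fun s => a * s) (𝓝[>] 0) (𝓝 0) :=
      ((continuous_const_mul a).tendsto' 0 0 (mul_zero a)).mono_left nhdsWithin_le_nhds
    have hlhs := (((hS.pow 2).div_const 2).sub (hT.const_mul 2)).abs
    have hrhs := ((has.add (((hscale two_pos).sub hT).const_mul b)).add
      ((((hscale (mul_pos two_pos hL0)).sub (hscale (inv_pos.2 hL0))).pow 2).const_mul 2)).add_const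
        (e / (L - 1))
    simp only [sub_self, mul_zero, add_zero, zero_pow two_ne_zero, zero_add] at hrhs
    refine le_of_tendsto_of_tendsto hlhs hrhs ?_
    have hsmall : ∀ᶠ s in 𝓝[>] (0 : ℝ), s < R / (4 * L) :=
      nhdsWithin_le_nhds (gt_mem_nhds (by positivity))
    filter_upwards [hsmall, self_mem_nhdsWithin] with s hsR (hs : 0 < s)
    rw [lt_div_iff₀ (by positivity)] at hsR
    rw [show 2 * L * s = 2 * s * L by ring, inv_mul_eq_div]
    exact h s L hs hL (by nlinarith) (by nlinarith)
  have hlim : Tendsto (fun L : ℝ => e / (L - 1)) atTop (𝓝 0) :=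
    (tendsto_atTop_add_const_right atTop (-1) tendsto_id).const_div_atTop e
  have hzero : |σ ^ 2 / 2 - 2 * τ| ≤ 0 := ge_of_tendsto hlim ((eventually_gt_atTop 1).mono hbound)
  linarith [abs_nonpos_iff.1 hzero]

theorem IsBlowUpMass.sq_eq_four_mul {m M : ℕ → ℝ → ℝ} {A B E : ℕ → ℝ} {a b e R μ τ : ℝ}
    (hm : IsBlowUpMass m μ) (hM : IsBlowUpMass M τ) (hA : Tendsto A atTop (𝓝 a))
    (hB : Tendsto B atTop (𝓝 b)) (hE : Tendsto E atTop (𝓝 e)) (hR : R ∈ Ioo 0 1)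
    (h : ∀ k s L, 0 < s → 1 < L → 4 * s ≤ R → 2 * s * L ≤ R → |m k s ^ 2 / 2 - 2 * M k s| ≤
      A k * s + B k * (M k (2 * s) - M k s) + 2 * (M k (2 * s * L) - M k (s / L)) ^ 2 +
        E k / (L - 1)) :
    μ ^ 2 = 4 * τ := by
  obtain ⟨S, hS, hμ⟩ := hm
  obtain ⟨T, hT, hτ⟩ := hM
  refine sq_eq_four_mul_of_forall_abs_le (a := a) (b := b) (e := e) hμ hτ hR.1
    fun s L hs hL hsR hsL => ?_
  have hR1 := hR.2
  have hsL0 : 0 < s / L := div_pos hs (one_pos.trans hL)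
  have hsLs : s / L < s := div_lt_self hs hL
  have hTs := hT s hs (by linarith)
  have hT2s := hT (2 * s) (by linarith) (by linarith)
  have hTL := hT (2 * s * L) (by nlinarith) (by linarith)
  have hTL' := hT (s / L) hsL0 (by linarith)
  exact le_of_tendsto_of_tendsto'
    ((((hS s hs (by linarith)).pow 2).div_const 2).sub (hTs.const_mul 2)).abs
    ((((hA.mul_const s).add (hB.mul (hT2s.sub hTs))).add (((hTL.sub hTL').pow 2).const_mul 2)).add
      (hE.div_const (L - 1)))
    fun k => h k s L hs hL hsR hsL

end IteratedLimit

section SinhGordon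

theorem diskMass_congr {f g : E2 → ℝ} {r : ℝ} (hfg : ∀ x ∈ ball (0 : E2) r, f x = g x) :
    diskMass f r = diskMass g r := by
  rw [diskMass, setIntegral_congr_fun measurableSet_ball hfg, diskMass]

/-- The class of nonnegative `C¹` functions `h` on the disk of radius `δ` with `|∇h| ≤ C h`, that
is, with `|∇ log h| ≤ C` where `h` is positive. -/
structure HasLogGradientBound (δ C : ℝ) (h : E2 → ℝ) : Prop where
  contDiffOn : ContDiffOn ℝ 1 h (ball 0 δ)
  nonneg : ∀ x ∈ ball (0 : E2) δ, 0 ≤ h x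
  norm_fderiv_le : ∀ x ∈ ball (0 : E2) δ, ‖fderiv ℝ h x‖ ≤ C * h x

section Solution

variable {δ C : ℝ} {u h₁ h₂ : E2 → ℝ} (hu : ContDiffOn ℝ 2 u (ball 0 δ))
  (heq : ∀ x ∈ ball (0 : E2) δ,
    lap u x + h₁ x * Real.exp (u x) - h₂ x * Real.exp (-(u x)) = 0)

include hu heq

theorem diskMass_lap_add {r : ℝ} (hh₁ : ContinuousOn h₁ (ball 0 δ)) (hr : r < δ) :
    diskMass (lap u) r + diskMass (fun x => h₁ x * Real.exp (u x)) r =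
      diskMass (fun x => h₂ x * Real.exp (-(u x))) r := by
  rw [← diskMass_add (g := fun x => h₁ x * Real.exp (u x)) (continuousOn_lap hu)
    (hh₁.mul hu.continuousOn.rexp) hr]
  exact diskMass_congr fun x hx => sub_eq_zero.1 (heq x (ball_subset_ball hr.le hx))

theorem pohozaevMajorant_exp_add_exp_neg
    (hh₁ : HasLogGradientBound δ C h₁) (hh₂ : HasLogGradientBound δ C h₂) :
    PohozaevMajorant δ C u fun x => h₁ x * Real.exp (u x) + h₂ x * Real.exp (-(u x)) where
  contDiffOn_two := hu
  contDiffOn_one :=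
    have hu₁ := hu.of_le one_le_two
    (hh₁.contDiffOn.mul hu₁.exp).add (hh₂.contDiffOn.mul hu₁.neg.exp)
  abs_lap_le x hx := by
    have h₁_nonneg := mul_nonneg (hh₁.nonneg x hx) (Real.exp_pos (u x)).le
    have h₂_nonneg := mul_nonneg (hh₂.nonneg x hx) (Real.exp_pos (-(u x))).le
    exact abs_le.2 ⟨by linarith [heq x hx], by linarith [heq x hx]⟩
  abs_fderiv_add_le x hx := by
    have hnhds := isOpen_ball.mem_nhds hx
    have hdu := ((hu.contDiffAt hnhds).differentiableAt two_ne_zero).hasFDerivAt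
    have hd₁ := ((hh₁.contDiffOn.contDiffAt hnhds).differentiableAt one_ne_zero).hasFDerivAt
    have hd₂ := ((hh₂.contDiffOn.contDiffAt hnhds).differentiableAt one_ne_zero).hasFDerivAt
    have hfderiv : lap u x * fderiv ℝ u x x +
        fderiv ℝ (fun x => h₁ x * Real.exp (u x) + h₂ x * Real.exp (-(u x))) x x =
        fderiv ℝ h₁ x x * Real.exp (u x) + fderiv ℝ h₂ x x * Real.exp (-(u x)) := by
      rw [((hd₁.fun_mul hdu.exp).fun_add (hd₂.fun_mul hdu.fun_neg.exp)).fderiv]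
      simp only [_root_.add_apply, _root_.smul_apply, _root_.neg_apply, smul_eq_mul]
      linear_combination fderiv ℝ u x x * heq x hx
    have habs {h : E2 → ℝ} (hh : HasLogGradientBound δ C h) :
        |fderiv ℝ h x x| ≤ C * h x * ‖x‖ :=
      (fderiv ℝ h x).le_of_opNorm_le (hh.norm_fderiv_le x hx) x
    calc _ ≤ |fderiv ℝ h₁ x x| * Real.exp (u x) + |fderiv ℝ h₂ x x| * Real.exp (-(u x)) := by
          rw [hfderiv]
          refine (abs_add_le _ _).trans_eq ?_
          rw [abs_mul, abs_mul, Real.abs_exp, Real.abs_exp]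
      _ ≤ C * h₁ x * ‖x‖ * Real.exp (u x) + C * h₂ x * ‖x‖ * Real.exp (-(u x)) := by
          gcongr
          · exact habs hh₁
          · exact habs hh₂
      _ = _ := by ring

end Solution

theorem pohozaev_relation_general (u h₁ h₂ : ℕ → E2 → ℝ) (σ₁ σ₂ C K R : ℝ) (hC : 0 ≤ C)
    (hR : R ∈ Ioo 0 1) (hu : ∀ k, ContDiffOn ℝ 2 (u k) (ball 0 1))
    (hh₁ : ∀ k, HasLogGradientBound 1 C (h₁ k)) (hh₂ : ∀ k, HasLogGradientBound 1 C (h₂ k))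
    (heq : ∀ k, ∀ x ∈ ball (0 : E2) 1,
      lap (u k) x + h₁ k x * Real.exp (u k x) - h₂ k x * Real.exp (-(u k x)) = 0)
    (hosc : ∀ k, ∃ c, ∀ x ∈ sphere (0 : E2) R, |u k x - c| ≤ K)
    (hσ₁ : IsBlowUpMass (mass1 u h₁) σ₁) (hσ₂ : IsBlowUpMass (mass2 u h₂) σ₂) :
    4 * (σ₁ + σ₂) = (σ₁ - σ₂) ^ 2 := by
  let g : ℕ → E2 → ℝ := fun k x => h₁ k x * Real.exp (u k x) + h₂ k x * Real.exp (-(u k x))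
  have hmajorant (k : ℕ) : PohozaevMajorant 1 C (u k) (g k) :=
    pohozaevMajorant_exp_add_exp_neg (hu k) (heq k) (hh₁ k) (hh₂ k)
  have hdiff : IsBlowUpMass (fun k r => diskMass (lap (u k)) r) (σ₂ - σ₁) :=
    (hσ₂.sub hσ₁).congr fun k r hr => sub_eq_of_eq_add
      (diskMass_lap_add (hu k) (heq k) (hh₁ k).contDiffOn.continuousOn hr.2).symm
  have hsum : IsBlowUpMass (fun k r => diskMass (g k) r) (σ₁ + σ₂) :=
    (hσ₁.add hσ₂).congr fun k r hr => (diskMass_add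
      ((hh₁ k).contDiffOn.continuousOn.mul (hu k).continuousOn.rexp)
      ((hh₂ k).contDiffOn.continuousOn.mul (hu k).continuousOn.neg.rexp) hr.2).symm
  obtain ⟨M, hM⟩ := hsum.exists_tendsto hR
  have hsq := hdiff.sq_eq_four_mul hsum
    ((hM.const_mul (2 * C)).add ((hM.mul (hM.add_const (2 * K))).const_mul (8 / R)))
    (hM.add_const 4) (hM.pow 2) hR fun k s L hs hL hsR hsL => by
      obtain ⟨c, hc⟩ := hosc k
      refine ((hmajorant k).abs_sq_half_sub_le hC hs hL hsR hsL hR.2 hc).trans_eq ?_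
      ring
  rw [← hsq]
  ring

theorem hasLogGradientBound_of_norm_iteratedFDerivWithin_le {δ C : ℝ} {h : E2 → ℝ} (hC : 0 < C)
    (hh : ContDiffOn ℝ 1 h (ball 0 δ)) (hinv : ∀ x ∈ ball (0 : E2) δ, C⁻¹ ≤ h x)
    (hder : ∀ x ∈ ball (0 : E2) δ, ‖iteratedFDerivWithin ℝ 1 h (ball 0 δ) x‖ ≤ C) :
    HasLogGradientBound δ (C ^ 2) h where
  contDiffOn := hh
  nonneg x hx := (inv_pos.2 hC).le.trans (hinv x hx)
  norm_fderiv_le x hx := by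
    rw [← fderivWithin_of_isOpen isOpen_ball hx,
      ← norm_iteratedFDerivWithin_one h (isOpen_ball.uniqueDiffWithinAt hx)]
    calc _ ≤ C := hder x hx
      _ = C ^ 2 * C⁻¹ := by field_simp
      _ ≤ C ^ 2 * h x := by
          gcongr
          exact hinv x hx

theorem BlowUpSetup.exists_hasLogGradientBound {u h₁ h₂ : ℕ → E2 → ℝ}
    (hsetup : BlowUpSetup u h₁ h₂) :
    ∃ C : ℝ, 0 ≤ C ∧ (∀ k, HasLogGradientBound 1 C (h₁ k)) ∧
      ∀ k, HasLogGradientBound 1 C (h₂ k) := by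
  obtain ⟨-, -, -, -, ⟨C, hC, hsmooth, hbound, hder, -⟩, -⟩ := hsetup
  exact ⟨C ^ 2, sq_nonneg C,
    fun k => hasLogGradientBound_of_norm_iteratedFDerivWithin_le hC
      ((hsmooth k).1.of_le (by norm_num)) (fun x hx => (hbound k x hx).1)
      fun x hx => (hder k x hx 1 (by norm_num)).1,
    fun k => hasLogGradientBound_of_norm_iteratedFDerivWithin_le hC
      ((hsmooth k).2.of_le (by norm_num)) (fun x hx => (hbound k x hx).2.2.1)
      fun x hx => (hder k x hx 1 (by norm_num)).2⟩

theorem BlowUpSetup.exists_forall_sphere_abs_le {u h₁ h₂ : ℕ → E2 → ℝ} {R : ℝ}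
    (hsetup : BlowUpSetup u h₁ h₂) (hR : R ∈ Ioo 0 1) :
    ∃ K : ℝ, ∀ k, ∀ x ∈ sphere (0 : E2) R, |u k x| ≤ K := by
  obtain ⟨-, -, -, -, -, hbound, -⟩ := hsetup
  refine hbound _ (isCompact_sphere 0 R) fun x hx => ⟨sphere_subset_ball hR.2 hx, ?_⟩
  exact ne_of_mem_sphere hx hR.1.ne'

end SinhGordon

/-- Proposition 3.1: under the standing blow-up assumptions, the blow-up
masses satisfy the Pohozaev-type relation `4(σ₁ + σ₂) = (σ₁ − σ₂)²`. -/
theorem pohozaev_relation (u h₁ h₂ : ℕ → E2 → ℝ) (σ₁ σ₂ : ℝ)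
    (hsetup : BlowUpSetup u h₁ h₂)
    (hσ₁ : IsBlowUpMass (mass1 u h₁) σ₁)
    (hσ₂ : IsBlowUpMass (mass2 u h₂) σ₂) :
    4 * (σ₁ + σ₂) = (σ₁ - σ₂)^2 := by
  obtain ⟨C, hC, hh₁, hh₂⟩ := hsetup.exists_hasLogGradientBound
  obtain ⟨K, hK⟩ := hsetup.exists_forall_sphere_abs_le (R := 1 / 2) (by norm_num)
  exact pohozaev_relation_general u h₁ h₂ σ₁ σ₂ C K (1 / 2) hC (by norm_num) hsetup.1 hh₁ hh₂
    hsetup.2.1 (fun k => ⟨0, by simpa using hK k⟩) hσ₁ hσ₂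

end
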